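/- Let q ≡ 1 (mod 4) and let S(X) denote the number of integers q ≤ X with q ≡ 1 (mod 4) for which the Erdős conjecture holds mod q. Then liminf_{X→∞} S(X)/(X/4) ≥ 0.82. -/

import Mathlib

open Filter Topology Finset

/-- `f : ℕ → ℤ` is Erdősian mod `q`: periodic with period `q`, takes values `±1`
off multiples of `q`, and `0` on multiples of `q`. -/
def IsErdosian (q : ℕ) (f : ℕ → ℤ) : Prop :=
  (∀ n : ℕ, 1 ≤ n → f (n + q) = f n) ∧
  (∀ n : ℕ, 1 ≤ n → ¬ q ∣ n → f n = 1 ∨ f n = -1) ∧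
  (∀ n : ℕ, 1 ≤ n → q ∣ n → f n = 0)

/-- The Erdős conjecture is false mod `q`: there is an Erdősian function mod `q`
whose partial sums `∑_{n=1}^N f(n)/n` tend to `0`. -/
def ErdosConjectureFalse (q : ℕ) : Prop :=
  ∃ f : ℕ → ℤ, IsErdosian q f ∧
    Tendsto (fun N : ℕ => ∑ n ∈ Finset.Icc 1 N, (f n : ℝ) / n) atTop (nhds 0)

/-- The Erdős conjecture holds (is true) mod `q`. -/
def ErdosConjectureHolds (q : ℕ) : Prop := ¬ ErdosConjectureFalse q


section
open Filter Topology Finset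

lemma bk_div_pow (T : ℕ) : ∀ (f : ℂ → ℂ), Differentiable ℂ f → ∀ a : ℂ, (T : ℕ∞) ≤ analyticOrderAt f a →
    ∃ g : ℂ → ℂ, Differentiable ℂ g ∧ ∀ z, f z = (z - a) ^ T * g z := by
  induction T with
  | zero => intro f hf a _; exact ⟨f, hf, by simp⟩
  | succ T ih =>
    intro f hf a h
    have hd : Differentiable ℂ (dslope f a) := by
      rw [← differentiableOn_univ] at hf ⊢
      exact (Complex.differentiableOn_dslope (by simp)).2 hf
    have h0 : f a = 0 := by
      by_contra h0
      have := ((hf.analyticAt a).analyticOrderAt_eq_zero).2 h0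
      rw [this] at h
      simp at h
    have hfe : f = (fun z => (z - a)) * dslope f a := by
      ext z
      have := sub_smul_dslope f a z
      simp [h0] at this
      simp [this]
    have hid : AnalyticAt ℂ (fun z => z - a) a := by fun_prop
    have h1 : analyticOrderAt (fun z : ℂ => z - a) a = 1 := by
      have := hid.analyticOrderAt_eq_natCast (n := 1)
      simp only [Nat.cast_one] at this
      rw [this]
      exact ⟨fun _ => 1, analyticAt_const, by simp, by simp⟩
    have h2 : analyticOrderAt f a = 1 + analyticOrderAt (dslope f a) a := by
      conv_lhs => rw [hfe]
      rw [analyticOrderAt_mul hid (hd.analyticAt a), h1]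
    have h3 : (T : ℕ∞) ≤ analyticOrderAt (dslope f a) a := by
      rw [h2, add_comm] at h
      push_cast at h
      exact (ENat.add_le_add_iff_left ENat.one_ne_top).1 h
    obtain ⟨g, hg, hg'⟩ := ih _ hd a h3
    refine ⟨g, hg, fun z => ?_⟩
    rw [congrFun hfe z]
    simp only [Pi.mul_apply, hg' z]
    ring

lemma bk_div_prod (T : ℕ) (s : Finset ℂ) : ∀ (f : ℂ → ℂ), Differentiable ℂ f →
    (∀ a ∈ s, (T : ℕ∞) ≤ analyticOrderAt f a) →
    ∃ g : ℂ → ℂ, Differentiable ℂ g ∧ ∀ z, f z = (∏ a ∈ s, (z - a) ^ T) * g z := by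
  induction s using Finset.induction_on with
  | empty => intro f hf _; exact ⟨f, hf, by simp⟩
  | insert a s ha ih =>
    intro f hf h
    obtain ⟨g, hg, hfg⟩ := bk_div_pow T f hf a (h a (by simp))
    have : ∀ b ∈ s, (T : ℕ∞) ≤ analyticOrderAt g b := by
      intro b hb
      have hb' := h b (by simp [hb])
      have hfe : f = (fun z => (z - a) ^ T) * g := by ext z; simp [hfg z]
      have hne : b - a ≠ 0 := by
        intro h0
        exact ha (by rw [← sub_eq_zero.1 h0]; exact hb)
      have hid : AnalyticAt ℂ (fun z => (z - a) ^ T) b := by fun_prop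
      rw [hfe, analyticOrderAt_mul hid (hg.analyticAt b), hid.analyticOrderAt_eq_zero.2
        (pow_ne_zero _ hne), zero_add] at hb'
      exact hb'
    obtain ⟨k, hk, hgk⟩ := ih g hg this
    refine ⟨k, hk, fun z => ?_⟩
    rw [hfg z, hgk z, prod_insert ha]
    ring

lemma bk_schwarz (f : ℂ → ℂ) (hf : Differentiable ℂ f) (h h' T : ℕ) (hh : h ≤ h') (hpos : 0 < h')
    (hz : ∀ l < h, (T : ℕ∞) ≤ analyticOrderAt f (l : ℂ)) (B : ℝ)
    (hB : ∀ z : ℂ, ‖z‖ = 4 * h' → ‖f z‖ ≤ B) (l : ℕ) (hl : l < h') :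
    ‖f l‖ ≤ B * Real.exp (-(h * T : ℝ)) := by
  set s : Finset ℂ := (range h).image (fun n : ℕ => (n : ℂ)) with hs
  have hcard : s.card = h := by
    rw [hs, card_image_of_injective _ Nat.cast_injective, card_range]
  obtain ⟨g, hg, hfg⟩ := bk_div_prod T s f hf (by
    intro a ha
    simp only [hs, mem_image, mem_range] at ha
    obtain ⟨n, hn, rfl⟩ := ha
    exact hz n hn)
  have hp : (0 : ℝ) < h' := by exact_mod_cast hpos
  have hB0 : 0 ≤ B := le_trans (norm_nonneg _) (hB (4 * h') (by simp))
  have hgb : ∀ z : ℂ, ‖z‖ = 4 * h' → ‖g z‖ ≤ B / (3 * h') ^ (h * T) := by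
    intro z hz'
    rw [le_div_iff₀ (by positivity)]
    refine le_trans ?_ (hB z hz')
    rw [hfg z, norm_mul, mul_comm]
    gcongr
    rw [norm_prod, ← hcard, mul_comm s.card T, pow_mul, ← prod_const]
    refine prod_le_prod (fun _ _ => by positivity) (fun a ha => ?_)
    rw [norm_pow]
    gcongr
    simp only [hs, mem_image, mem_range] at ha
    obtain ⟨n, hn, rfl⟩ := ha
    have h1 := norm_sub_norm_le z (n : ℂ)
    have h2 : ‖(n : ℂ)‖ ≤ h' := by
      simp; omega
    linarith
  have hl' : ((l : ℝ)) < h' := by exact_mod_cast hl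
  have hgl : ‖g l‖ ≤ B / (3 * h') ^ (h * T) := by
    refine Complex.norm_le_of_forall_mem_frontier_norm_le (U := Metric.ball 0 (4 * h'))
      Metric.isBounded_ball hg.diffContOnCl (fun z hz' => hgb z ?_) ?_
    · rw [frontier_ball _ (by positivity)] at hz'
      simpa using hz'
    · apply subset_closure
      simp
      linarith
  have hprod : ‖∏ a ∈ s, ((l : ℂ) - a) ^ T‖ ≤ (h' : ℝ) ^ (h * T) := by
    rw [norm_prod, ← hcard, mul_comm s.card T, pow_mul, ← prod_const]
    refine prod_le_prod (fun _ _ => by positivity) (fun a ha => ?_)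
    rw [norm_pow]
    gcongr
    simp only [hs, mem_image, mem_range] at ha
    obtain ⟨n, hn, rfl⟩ := ha
    have : ((l : ℂ) - n) = (((l : ℝ) - n : ℝ) : ℂ) := by push_cast; rfl
    rw [this, Complex.norm_real, Real.norm_eq_abs, abs_le]
    have : (n : ℝ) < h := by exact_mod_cast hn
    have : (h : ℝ) ≤ h' := by exact_mod_cast hh
    have : (0:ℝ) ≤ n := by positivity
    have : (0:ℝ) ≤ l := by positivity
    constructor <;> linarith
  have he : Real.exp (-(h * T : ℝ)) = (Real.exp 1)⁻¹ ^ (h * T) := by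
    rw [← Real.exp_neg, ← Real.exp_nat_mul]; push_cast; ring_nf
  calc ‖f l‖ = ‖∏ a ∈ s, ((l : ℂ) - a) ^ T‖ * ‖g l‖ := by rw [hfg, norm_mul]
    _ ≤ (h' : ℝ) ^ (h * T) * (B / (3 * h') ^ (h * T)) := by gcongr
    _ = B * (3⁻¹) ^ (h * T) := by
      rw [mul_pow, inv_pow]; field_simp
    _ ≤ B * Real.exp (-(h * T : ℝ)) := by
      rw [he]
      gcongr
      exact Real.exp_one_lt_three.le

end

section
open Filter Topology Finset

section expo
variable {σ : Type*} [Fintype σ]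

lemma bk_iter (w Λ : σ → ℂ) (k : ℕ) :
    iteratedDeriv k (fun z : ℂ => ∑ s, w s * Complex.exp (z * Λ s)) =
      fun z : ℂ => ∑ s, w s * Λ s ^ k * Complex.exp (z * Λ s) := by
  induction k with
  | zero => simp
  | succ k ih =>
    rw [iteratedDeriv_succ, ih]
    ext z
    apply HasDerivAt.deriv
    apply HasDerivAt.fun_sum
    intro s _
    have h1 : HasDerivAt (fun z : ℂ => z * Λ s) (Λ s) z := by
      simpa using (hasDerivAt_id z).mul_const (Λ s)
    have := (h1.cexp).const_mul (w s * Λ s ^ k)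
    convert! this using 1
    ring

lemma bk_diff (w Λ : σ → ℂ) :
    Differentiable ℂ (fun z : ℂ => ∑ s, w s * Complex.exp (z * Λ s)) := by
  fun_prop

lemma bk_zero_est [DecidableEq σ] (w Λ : σ → ℂ) (hΛ : Function.Injective Λ) (h M : ℕ)
    (hv : ∀ l < h, ∀ k < M, ∑ s, w s * Λ s ^ k * Complex.exp (l * Λ s) = 0)
    (hh : Fintype.card σ ≤ h)
    (hM : ∀ μ, (univ.filter (fun s => Complex.exp (Λ s) = Complex.exp (Λ μ))).card ≤ M) :
    w = 0 := by
  classical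
  have key : ∀ Q R : Polynomial ℂ, Q.natDegree < M → R.natDegree < h →
      ∑ s, w s * Q.eval (Λ s) * R.eval (Complex.exp (Λ s)) = 0 := by
    intro Q R hQ hR
    have : ∀ s, w s * Q.eval (Λ s) * R.eval (Complex.exp (Λ s)) =
        ∑ k ∈ range M, ∑ l ∈ range h, Q.coeff k * R.coeff l *
          (w s * Λ s ^ k * Complex.exp (l * Λ s)) := by
      intro s
      rw [Polynomial.eval_eq_sum_range' hQ, Polynomial.eval_eq_sum_range' hR, mul_sum (range M), sum_mul_sum]
      refine sum_congr rfl fun k _ => ?_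
      refine sum_congr rfl fun l _ => ?_
      rw [Complex.exp_nat_mul]
      ring
    simp_rw [this]
    rw [sum_comm]
    refine sum_eq_zero fun k hk => ?_
    rw [sum_comm]
    refine sum_eq_zero fun l hl => ?_
    rw [← mul_sum, hv l (by simpa using hl) k (by simpa using hk), mul_zero]
  ext μ
  set cl := univ.filter (fun s => Complex.exp (Λ s) = Complex.exp (Λ μ)) with hcl
  set im := univ.image (fun s => Complex.exp (Λ s)) with him
  have hμ : μ ∈ cl := by simp [hcl]
  have hμ' : Complex.exp (Λ μ) ∈ im := by simp [him]
  have := key (∏ s ∈ cl.erase μ, (Polynomial.X - Polynomial.C (Λ s)))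
    (∏ x ∈ im.erase (Complex.exp (Λ μ)), (Polynomial.X - Polynomial.C x)) (by
      rw [Polynomial.natDegree_finsetProd_X_sub_C_eq_card, card_erase_of_mem hμ]
      have := card_pos.2 ⟨μ, hμ⟩
      have : cl.card ≤ M := hM μ
      omega) (by
      rw [Polynomial.natDegree_finsetProd_X_sub_C_eq_card, card_erase_of_mem hμ']
      have := card_pos.2 ⟨_, hμ'⟩
      have : im.card ≤ Fintype.card σ := card_image_le
      omega)
  rw [sum_eq_single μ] at this
  · simp only [Polynomial.eval_prod, Polynomial.eval_sub, Polynomial.eval_X, Polynomial.eval_C]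
      at this
    rcases mul_eq_zero.1 this with h1 | h1
    · rcases mul_eq_zero.1 h1 with h2 | h2
      · exact h2
      · rw [prod_eq_zero_iff] at h2
        obtain ⟨s, hs, hs'⟩ := h2
        exact absurd (hΛ (sub_eq_zero.1 hs')).symm (mem_erase.1 hs).1
    · rw [prod_eq_zero_iff] at h1
      obtain ⟨x, hx, hx'⟩ := h1
      exact absurd (sub_eq_zero.1 hx').symm (mem_erase.1 hx).1
  · intro s _ hs
    by_cases hsc : s ∈ cl
    · have : Polynomial.eval (Λ s) (∏ s ∈ cl.erase μ, (Polynomial.X - Polynomial.C (Λ s))) = 0 := by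
        rw [Polynomial.eval_prod]
        exact prod_eq_zero (mem_erase.2 ⟨hs, hsc⟩) (by simp)
      rw [this]; ring
    · have : Polynomial.eval (Complex.exp (Λ s)) (∏ x ∈ im.erase (Complex.exp (Λ μ)),
          (Polynomial.X - Polynomial.C x)) = 0 := by
        rw [Polynomial.eval_prod]
        refine prod_eq_zero (i := Complex.exp (Λ s)) (mem_erase.2 ⟨?_, ?_⟩) (by simp)
        · simpa [hcl] using hsc
        · simp [him]
      rw [this]; ring
  · simp
end expo

open NumberField

lemma bk_house_le {K : Type*} [Field K] [NumberField K] (x : K) (B : ℝ) :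
    house x ≤ B ↔ ∀ σ : K →+* ℂ, ‖σ x‖ ≤ B := by
  constructor
  · intro h σ
    exact (norm_embedding_le_house x σ).trans h
  · intro h
    have hB : 0 ≤ B := (norm_nonneg _).trans (h (Classical.arbitrary _))
    rw [house, pi_norm_le_iff_of_nonneg hB]
    exact h

lemma bk_liouville {K : Type*} [Field K] [NumberField K] (φ : K →+* ℂ) (x : 𝓞 K) (hx : x ≠ 0)
    (B E : ℝ) (hE : 0 ≤ E) (hB : ∀ σ : K →+* ℂ, ‖σ (x : K)‖ ≤ B) (hφ : ‖φ (x : K)‖ ≤ B * E) :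
    1 ≤ B ^ (Module.finrank ℚ K) * E := by
  have h1 := norm_norm_le_norm_mul_house_pow (x : K) φ
  have h2 : (1 : ℝ) ≤ ‖Algebra.norm ℚ (x : K)‖ := by
    rw [← Algebra.coe_norm_int]
    have : (1:ℝ) ≤ |(Algebra.norm ℤ x : ℝ)| := by
      exact_mod_cast Int.one_le_abs (Algebra.norm_ne_zero_iff.mpr hx)
    simpa [← Rat.norm_cast_real] using this
  have hh : house (x : K) ≤ B := (bk_house_le _ _).2 hB
  have hB0 : 0 ≤ B := (house_nonneg _).trans hh
  have hd : 0 < Module.finrank ℚ K := Module.finrank_pos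
  calc (1:ℝ) ≤ _ := h2
    _ ≤ _ := h1
    _ ≤ (B * E) * B ^ (Module.finrank ℚ K - 1) := by
      gcongr
      · exact pow_nonneg (house_nonneg _) _
      · exact house_nonneg _
    _ = B ^ (Module.finrank ℚ K - 1 + 1) * E := by ring
    _ = _ := by rw [Nat.sub_add_cancel hd]

end

section
open Filter Topology Finset
open NumberField

section bk
set_option linter.unusedSectionVars false
variable {K : Type} [Field K] [NumberField K] (φ : K →+* ℂ) {ι : Type} [Fintype ι] [DecidableEq ι]
  (i0 : ι) (α b : ι → 𝓞 K) (ℓ : ι → ℂ)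

/-- the linear forms in the exponents -/
def bkV (lam : ι → ℕ) (i : ι) : 𝓞 K := b i0 * lam i - b i * lam i0

def bkA (lam : ι → ℕ) (m : ι → ℕ) (l : ℕ) : 𝓞 K :=
  (∏ i, bkV i0 b lam i ^ m i) * ∏ i, α i ^ (lam i * l)

def bkL (lam : ι → ℕ) : ℂ := ∑ i, (lam i : ℂ) * ℓ i

def bkX {L : ℕ} (p : (ι → Fin L) → 𝓞 K) (m : ι → ℕ) (l : ℕ) : 𝓞 K :=
  ∑ lam, p lam * bkA i0 α b (fun i => (lam i : ℕ)) m l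

lemma bkL_rel (hrel : ∑ i, φ (b i) * ℓ i = 0) (lam : ι → ℕ) :
    φ (b i0) * bkL ℓ lam = ∑ i, φ (bkV i0 b lam i) * ℓ i := by
  have : ∑ i, φ (bkV i0 b lam i) * ℓ i =
      φ (b i0) * bkL ℓ lam - lam i0 * ∑ i, φ (b i) * ℓ i := by
    rw [bkL, mul_sum, mul_sum, ← sum_sub_distrib]
    refine sum_congr rfl fun i _ => ?_
    simp only [bkV]
    push_cast
    simp only [map_sub, map_mul, map_natCast]
    ring
  rw [this, hrel]; ring

lemma bk_eval (hα : ∀ i, Complex.exp (ℓ i) = φ (α i)) {L : ℕ} (p : (ι → Fin L) → 𝓞 K)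
    (m : ι → ℕ) (l : ℕ) :
    φ (bkX i0 α b p m l) = ∑ lam : ι → Fin L, (φ (p lam) *
      ∏ i, φ (bkV i0 b (fun i => (lam i : ℕ)) i) ^ m i) *
      Complex.exp (l * bkL ℓ (fun i => (lam i : ℕ))) := by
  rw [bkX]
  push_cast
  rw [map_sum]
  refine sum_congr rfl fun lam _ => ?_
  rw [bkA]
  push_cast
  simp only [map_mul, map_prod, map_pow]
  rw [mul_assoc]
  congr 2
  rw [bkL, mul_sum, Complex.exp_sum]
  refine prod_congr rfl fun i _ => ?_
  rw [← hα, ← Complex.exp_nat_mul]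
  congr 1
  push_cast
  ring

/-- vanishing for all small multi-indices gives vanishing of derivatives -/
lemma bk_vanish (hα : ∀ i, Complex.exp (ℓ i) = φ (α i)) (hrel : ∑ i, φ (b i) * ℓ i = 0)
    (hb : b i0 ≠ 0) {L : ℕ} (p : (ι → Fin L) → 𝓞 K) (M l : ℕ)
    (hv : ∀ m : ι → ℕ, ∑ i, m i < M → bkX i0 α b p m l = 0) (k : ℕ) :
    ∀ m : ι → ℕ, ∑ i, m i + k < M → ∑ lam : ι → Fin L, (φ (p lam) *
      ∏ i, φ (bkV i0 b (fun i => (lam i : ℕ)) i) ^ m i) * bkL ℓ (fun i => (lam i : ℕ)) ^ k *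
      Complex.exp (l * bkL ℓ (fun i => (lam i : ℕ))) = 0 := by
  have hb' : φ (b i0) ≠ 0 := by
    rw [map_ne_zero]
    exact_mod_cast hb
  induction k with
  | zero =>
    intro m hm
    have := bk_eval φ i0 α b ℓ hα p m l
    rw [hv m (by simpa using hm)] at this
    simpa using this.symm
  | succ k ih =>
    intro m hm
    have key : ∀ lam : ι → Fin L, φ (b i0) * ((φ (p lam) *
      ∏ i, φ (bkV i0 b (fun i => (lam i : ℕ)) i) ^ m i) * bkL ℓ (fun i => (lam i : ℕ)) ^ (k + 1) *
      Complex.exp (l * bkL ℓ (fun i => (lam i : ℕ)))) = ∑ j, ℓ j * ((φ (p lam) *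
      ∏ i, φ (bkV i0 b (fun i => (lam i : ℕ)) i) ^ ((m + Pi.single j 1 : ι → ℕ) i)) *
      bkL ℓ (fun i => (lam i : ℕ)) ^ k *
      Complex.exp (l * bkL ℓ (fun i => (lam i : ℕ)))) := by
      intro lam
      have h1 : ∀ j, ∏ i, φ (bkV i0 b (fun i => (lam i : ℕ)) i) ^ ((m + Pi.single j 1 : ι → ℕ) i) =
          (∏ i, φ (bkV i0 b (fun i => (lam i : ℕ)) i) ^ m i) *
            φ (bkV i0 b (fun i => (lam i : ℕ)) j) := by
        intro j
        simp only [Pi.add_apply, pow_add, prod_mul_distrib]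
        congr 1
        rw [prod_eq_single j] <;> simp +contextual [Pi.single_apply]
      simp_rw [h1]
      have h2 := bkL_rel φ i0 b ℓ hrel (fun i => (lam i : ℕ))
      rw [pow_succ]
      calc _ = (φ (p lam) *
            ∏ i, φ (bkV i0 b (fun i => (lam i : ℕ)) i) ^ m i) * bkL ℓ (fun i => (lam i : ℕ)) ^ k *
            Complex.exp (l * bkL ℓ (fun i => (lam i : ℕ))) *
            (φ (b i0) * bkL ℓ (fun i => (lam i : ℕ))) := by ring
        _ = _ := by
          rw [h2, mul_sum]
          refine sum_congr rfl fun j _ => ?_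
          ring
    have : φ (b i0) * (∑ lam : ι → Fin L, (φ (p lam) *
      ∏ i, φ (bkV i0 b (fun i => (lam i : ℕ)) i) ^ m i) * bkL ℓ (fun i => (lam i : ℕ)) ^ (k + 1) *
      Complex.exp (l * bkL ℓ (fun i => (lam i : ℕ)))) = 0 := by
      rw [mul_sum]
      simp_rw [key]
      rw [sum_comm]
      refine sum_eq_zero fun j _ => ?_
      rw [← mul_sum, ih, mul_zero]
      simp [sum_add_distrib]
      omega
    exact (mul_eq_zero.1 this).resolve_left hb'

/-- Size hypotheses -/
structure BkSize (L : ℕ) (c : ℝ) : Prop where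
  hc : 1 ≤ c
  hL : 1 ≤ L
  hv : ∀ lam : ι → Fin L, ∀ i, ∀ σ : K →+* ℂ, ‖σ (bkV i0 b (fun i => (lam i : ℕ)) i)‖ ≤ c * L
  hl : ∀ lam : ι → Fin L, ‖bkL ℓ (fun i => (lam i : ℕ))‖ ≤ c * L
  ha : ∀ lam : ι → Fin L, ∀ l : ℕ, ∀ σ : K →+* ℂ, ‖∏ i, σ (α i) ^ ((lam i : ℕ) * l)‖ ≤
    Real.exp (c * L * l)

lemma bk_size_exists : ∃ c : ℝ, ∀ L : ℕ, 1 ≤ L → BkSize i0 α b ℓ L c := by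
  obtain ⟨c, hc⟩ : ∃ c : ℝ, c = 1 + (house (b i0 : K) + ∑ i, house (b i : K)) + ∑ i, ‖ℓ i‖ + ∑ i, house (α i : K) := ⟨_, rfl⟩
  have hn1 := house_nonneg (b i0 : K)
  have hn2 : 0 ≤ ∑ i, house (b i : K) := sum_nonneg fun i _ => house_nonneg _
  have hn3 : 0 ≤ ∑ i, ‖ℓ i‖ := sum_nonneg fun i _ => norm_nonneg _
  have hn4 : 0 ≤ ∑ i, house (α i : K) := sum_nonneg fun i _ => house_nonneg _
  refine ⟨c, fun L hL => ⟨by linarith, hL, ?_, ?_, ?_⟩⟩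
  · intro lam i σ
    have h1 := norm_embedding_le_house (b i0 : K) σ
    have h2 := norm_embedding_le_house (b i : K) σ
    have h3 : house (b i : K) ≤ ∑ i, house (b i : K) :=
      single_le_sum (f := fun i => house (b i : K)) (fun i _ => house_nonneg _) (mem_univ i)
    have hl1 : ((lam i : ℕ) : ℝ) ≤ L := by exact_mod_cast (lam i).2.le
    have hl2 : ((lam i0 : ℕ) : ℝ) ≤ L := by exact_mod_cast (lam i0).2.le
    simp only [bkV]
    push_cast
    simp only [map_sub, map_mul, map_natCast]
    calc _ ≤ ‖σ (b i0)‖ * (lam i : ℕ) + ‖σ (b i)‖ * (lam i0 : ℕ) := by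
          refine (norm_sub_le _ _).trans ?_
          simp
      _ ≤ house (b i0 : K) * L + (∑ i, house (b i : K)) * L := by
          exact add_le_add (mul_le_mul h1 hl1 (Nat.cast_nonneg _) hn1)
            (mul_le_mul (h2.trans h3) hl2 (Nat.cast_nonneg _) hn2)
      _ ≤ c * L := by
          rw [← add_mul]
          exact mul_le_mul_of_nonneg_right (by linarith) (Nat.cast_nonneg _)
  · intro lam
    rw [bkL]
    calc _ ≤ ∑ i, ‖((lam i : ℕ) : ℂ) * ℓ i‖ := norm_sum_le _ _
      _ ≤ ∑ i, L * ‖ℓ i‖ := by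
          refine sum_le_sum fun i _ => ?_
          rw [norm_mul]
          gcongr
          simpa using (lam i).2.le
      _ = (∑ i, ‖ℓ i‖) * L := by rw [← mul_sum]; ring
      _ ≤ _ := by gcongr; linarith
  · intro lam l σ
    rw [norm_prod]
    calc _ ≤ ∏ i, Real.exp (house (α i : K) * L * l) := by
          refine prod_le_prod (fun _ _ => norm_nonneg _) fun i _ => ?_
          rw [norm_pow]
          calc _ ≤ Real.exp (house (α i : K)) ^ ((lam i : ℕ) * l) := by
                gcongr
                refine (norm_embedding_le_house _ σ).trans ?_
                linarith [Real.add_one_le_exp (house (α i : K))]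
            _ = Real.exp (house (α i : K) * (lam i : ℕ) * l) := by
                rw [← Real.exp_nat_mul]; push_cast; ring_nf
            _ ≤ _ := by
                gcongr
                · exact house_nonneg _
                · exact (lam i).2.le
      _ = Real.exp ((∑ i, house (α i : K)) * L * l) := by
          rw [← Real.exp_sum, sum_mul, sum_mul]
      _ ≤ _ := by gcongr; linarith

lemma bk_extrap (hα : ∀ i, Complex.exp (ℓ i) = φ (α i)) (hrel : ∑ i, φ (b i) * ℓ i = 0)
    (hb : b i0 ≠ 0) {L : ℕ} {c : ℝ} (hs : BkSize i0 α b ℓ L c) (p : (ι → Fin L) → 𝓞 K) (P : ℝ)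
    (hP : ∀ lam, ∀ σ : K →+* ℂ, ‖σ (p lam)‖ ≤ P) (h h' M : ℕ) (hh : h ≤ h') (hpos : 0 < h')
    (hv : ∀ l < h, ∀ m : ι → ℕ, ∑ i, m i < 2 * M → bkX i0 α b p m l = 0)
    (hineq : ((L : ℝ) ^ Fintype.card ι * P * (c * L) ^ M * Real.exp (4 * c * L * h')) ^
      (Module.finrank ℚ K) < Real.exp (h * M)) :
    ∀ l < h', ∀ m : ι → ℕ, ∑ i, m i < M → bkX i0 α b p m l = 0 := by
  intro l hl m hm
  by_contra hne
  have hL1 : (1 : ℝ) ≤ L := by exact_mod_cast hs.hL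
  have hcL : 1 ≤ c * L := one_le_mul_of_one_le_of_one_le hs.hc hL1
  have : Nonempty (Fin L) := ⟨⟨0, hs.hL⟩⟩
  have hP0 : 0 ≤ P := (norm_nonneg _).trans (hP (fun _ => Classical.arbitrary _) φ)
  have hprodv : ∀ lam : ι → Fin L, ∀ σ : K →+* ℂ,
      ‖∏ i, σ (bkV i0 b (fun i => (lam i : ℕ)) i) ^ m i‖ ≤ (c * L) ^ M := by
    intro lam σ
    rw [norm_prod]
    calc _ ≤ ∏ i, (c * L) ^ m i := by
          refine prod_le_prod (fun _ _ => norm_nonneg _) fun i _ => ?_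
          rw [norm_pow]
          gcongr
          exact hs.hv lam i σ
      _ = (c * L) ^ (∑ i, m i) := by rw [prod_pow_eq_pow_sum]
      _ ≤ _ := pow_le_pow_right₀ hcL hm.le
  have hcard : (univ : Finset (ι → Fin L)).card = L ^ Fintype.card ι := by simp
  set B := (L : ℝ) ^ Fintype.card ι * P * (c * L) ^ M * Real.exp (4 * c * L * h') with hB
  have hlh : (l : ℝ) ≤ h' := by exact_mod_cast hl.le
  have hsum : ∀ g : (ι → Fin L) → ℂ, (∀ lam, ‖g lam‖ ≤ P * (c * L) ^ M * Real.exp (4 * c * L * h')) →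
      ‖∑ lam, g lam‖ ≤ B := by
    intro g hg
    refine (norm_sum_le _ _).trans ?_
    refine (sum_le_card_nsmul _ _ _ fun lam _ => hg lam).trans ?_
    rw [hcard, nsmul_eq_mul, hB]
    push_cast
    apply le_of_eq; ring
  have hc0 : 0 ≤ c := by linarith [hs.hc]
  have hall : ∀ σ : K →+* ℂ, ‖σ (bkX i0 α b p m l : K)‖ ≤ B := by
    intro σ
    rw [bkX]
    push_cast
    rw [map_sum]
    apply hsum
    intro lam
    rw [bkA]
    push_cast
    simp only [map_mul, map_prod, map_pow]
    rw [norm_mul, norm_mul, mul_assoc]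
    gcongr
    · exact hP lam σ
    · exact hprodv lam σ
    · refine (hs.ha lam l σ).trans ?_
      gcongr
      nlinarith
  set w : (ι → Fin L) → ℂ := fun lam => φ (p lam) *
      ∏ i, φ (bkV i0 b (fun i => (lam i : ℕ)) i) ^ m i with hw
  set Λ : (ι → Fin L) → ℂ := fun lam => bkL ℓ (fun i => (lam i : ℕ)) with hΛ
  have hφ : ‖φ (bkX i0 α b p m l : K)‖ ≤ B * Real.exp (-(h * M : ℝ)) := by
    rw [bk_eval φ i0 α b ℓ hα p m l]
    refine bk_schwarz (fun z : ℂ => ∑ s, w s * Complex.exp (z * Λ s)) (bk_diff w Λ) h h' M hh hpos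
      ?_ B ?_ l hl
    · intro l' hl'
      rw [natCast_le_analyticOrderAt_iff_iteratedDeriv_eq_zero ((bk_diff w Λ).analyticAt _)]
      intro k hk
      rw [bk_iter]
      exact bk_vanish φ i0 α b ℓ hα hrel hb p (2 * M) l' (hv l' hl') k m (by omega)
    · intro z hz
      apply hsum
      intro lam
      simp only [hw]
      rw [norm_mul, norm_mul]
      gcongr
      · exact hP lam φ
      · exact hprodv lam φ
      · rw [Complex.norm_exp]
        gcongr
        refine (Complex.re_le_norm _).trans ?_
        rw [norm_mul, hz]
        calc _ ≤ 4 * (h' : ℝ) * (c * L) := by gcongr; exact hs.hl lam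
          _ = _ := by ring
  have := bk_liouville φ (bkX i0 α b p m l) hne B _ (Real.exp_pos _).le hall hφ
  rw [Real.exp_neg, ← div_eq_mul_inv, one_le_div (Real.exp_pos _)] at this
  linarith

end bk

end

section
open Filter Topology Finset
open NumberField

set_option maxHeartbeats 1000000 in
lemma bk_num (n D J t j : ℕ) (hj : j < J) (hJ : J ≤ 2 * t) (c C : ℝ) (hc : 1 ≤ c) (hC : 1 ≤ C)
    (L : ℕ) (hL : L = 2 * (4 ^ t) ^ n)
    (h1 : (2 : ℝ) ^ (J + 1) * D * ((3 * n + 1) * (Real.log (2 * c) + 2 * n * t) + c +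
      2 * Real.log C) < 4 ^ t)
    (h2 : 4 * c * D * 2 ^ (J + 1) ≤ (2 : ℝ) ^ t) :
    ((L : ℝ) ^ n * (C * (C * (L : ℝ) ^ n * ((c * L) ^ (n * (L * 2 ^ (2 * t))) *
      Real.exp (c * L * 4 ^ t)))) * (c * L) ^ (L * 2 ^ (2 * t - (j + 1))) *
      Real.exp (4 * c * L * ((2 ^ (2 * t + t * (j + 1)) : ℕ) : ℝ))) ^ D <
      Real.exp (((2 ^ (2 * t + t * j) : ℕ) : ℝ) * ((L * 2 ^ (2 * t - (j + 1)) : ℕ) : ℝ)) := by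
  have hL1 : (1 : ℝ) ≤ L := by
    rw [hL]; push_cast
    have : (1:ℝ) ≤ ((4:ℝ) ^ t) ^ n := one_le_pow₀ (one_le_pow₀ (by norm_num))
    linarith
  have hcL : 1 ≤ c * L := one_le_mul_of_one_le_of_one_le hc hL1
  obtain ⟨G, hG⟩ : ∃ G, G = Real.log (c * L) := ⟨_, rfl⟩
  have hG0 : 0 ≤ G := hG ▸ Real.log_nonneg hcL
  have hGe : c * L = Real.exp G := by rw [hG, Real.exp_log (by linarith)]
  have hGle : G ≤ Real.log (2 * c) + 2 * n * t := by
    have : c * L = (2 * c) * ((4 : ℝ) ^ t) ^ n := by rw [hL]; push_cast; ring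
    rw [hG, this, Real.log_mul (by positivity) (by positivity), Real.log_pow, Real.log_pow]
    have h4 : Real.log 4 ≤ 2 := by
      have : Real.log 4 = 2 * Real.log 2 := by
        rw [show (4:ℝ) = 2 ^ 2 by norm_num, Real.log_pow]; norm_num
      rw [this]; linarith [Real.log_two_lt_d9]
    have : (n : ℝ) * (t * Real.log 4) ≤ n * (t * 2) := by gcongr
    linarith
  obtain ⟨g, hg⟩ : ∃ g, g = Real.log C := ⟨_, rfl⟩
  have hg0 : 0 ≤ g := hg ▸ Real.log_nonneg hC
  have hCe : C = Real.exp g := by rw [hg, Real.exp_log (by linarith)]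
  obtain ⟨H, hH⟩ : ∃ H : ℝ, H = 2 ^ (2 * t + t * j) := ⟨_, rfl⟩
  obtain ⟨W, hW⟩ : ∃ W : ℝ, W = 2 ^ (2 * t - (j + 1)) := ⟨_, rfl⟩
  have hWpos : 0 < W := by rw [hW]; positivity
  have h4t : (4 : ℝ) ^ t = W * 2 ^ (j + 1) := by
    rw [hW, ← pow_add, Nat.sub_add_cancel (by omega), pow_mul]; norm_num
  have h4t' : (2 : ℝ) ^ (2 * t) = 4 ^ t := by rw [pow_mul]; norm_num
  have h22 : (2 : ℝ) ^ t * 2 ^ t = 4 ^ t := by rw [← mul_pow]; norm_num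
  have hHle : (4 : ℝ) ^ t ≤ H := by
    rw [hH, pow_add, h4t']
    exact le_mul_of_one_le_right (by positivity) (one_le_pow₀ (by norm_num))
  have hHpos : 0 < H := lt_of_lt_of_le (by positivity) hHle
  have hH' : (2 : ℝ) ^ (2 * t + t * (j + 1)) = H * 2 ^ t := by
    rw [hH, ← pow_add]; ring_nf
  have hWle : W ≤ 4 ^ t := by
    rw [h4t]; exact le_mul_of_one_le_right hWpos.le (one_le_pow₀ (by norm_num))
  have hLn : (L : ℝ) ^ n ≤ Real.exp (n * G) := by
    rw [Real.exp_nat_mul, ← hGe]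
    gcongr
    exact le_mul_of_one_le_left (by linarith) hc
  have hbase : (L : ℝ) ^ n * (C * (C * (L : ℝ) ^ n * ((c * L) ^ (n * (L * 2 ^ (2 * t))) *
      Real.exp (c * L * 4 ^ t)))) * (c * L) ^ (L * 2 ^ (2 * t - (j + 1))) *
      Real.exp (4 * c * L * ((2 ^ (2 * t + t * (j + 1)) : ℕ) : ℝ)) ≤
      Real.exp (n * G + (g + (g + n * G + (n * (L * 4 ^ t) * G + c * L * 4 ^ t))) + L * W * G +
        4 * c * L * (H * 2 ^ t)) := by
    simp only [Real.exp_add]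
    have e1 : (c * L) ^ (n * (L * 2 ^ (2 * t))) = Real.exp (n * (L * 4 ^ t) * G) := by
      rw [hGe, ← Real.exp_nat_mul]; push_cast; rw [h4t']
    have e2 : (c * L) ^ (L * 2 ^ (2 * t - (j + 1))) = Real.exp (L * W * G) := by
      rw [hGe, ← Real.exp_nat_mul]; push_cast; rw [hW]
    rw [e1, e2, ← hCe]
    push_cast
    rw [hH']
    gcongr
  refine lt_of_le_of_lt (pow_le_pow_left₀ (by positivity) hbase D) ?_
  rw [← Real.exp_nat_mul, Real.exp_lt_exp]
  push_cast
  rw [← hH, ← hW]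
  have h4pos : (1 : ℝ) ≤ 4 ^ t := one_le_pow₀ (by norm_num)
  have hM1 : 1 ≤ (L : ℝ) * 4 ^ t := one_le_mul_of_one_le_of_one_le hL1 h4pos
  set Mr := (L : ℝ) * 4 ^ t with hMr
  have hS : n * G + (g + (g + n * G + (n * Mr * G + c * L * 4 ^ t))) + L * W * G ≤
      Mr * ((3 * n + 1) * G + c + 2 * g) := by
    have a1 : n * G ≤ Mr * (n * G) := le_mul_of_one_le_left (by positivity) hM1
    have a2 : g ≤ Mr * g := le_mul_of_one_le_left hg0 hM1
    have a3 : (L : ℝ) * W * G ≤ Mr * G := by rw [hMr]; gcongr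
    have a4 : c * L * 4 ^ t = Mr * c := by rw [hMr]; ring
    rw [a4]
    linarith
  have hJj : (2 : ℝ) ^ (j + 2) ≤ 2 ^ (J + 1) := pow_le_pow_right₀ (by norm_num) (by omega)
  obtain ⟨Z, hZ⟩ : ∃ Z, Z = Real.log (2 * c) + 2 * n * t := ⟨_, rfl⟩
  rw [← hZ] at hGle h1
  have hZ0 : 0 ≤ Z := hG0.trans hGle
  have hX : (D : ℝ) * ((3 * n + 1) * G + c + 2 * g) * 2 ^ (j + 2) < H := by
    refine lt_of_lt_of_le (lt_of_le_of_lt ?_ h1) hHle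
    rw [← hg]
    calc _ ≤ (D : ℝ) * ((3 * n + 1) * Z + c + 2 * g) * 2 ^ (J + 1) := by
          gcongr
      _ = _ := by ring
  have hY : 4 * c * D * 2 ^ (j + 2) ≤ (2 : ℝ) ^ t := by
    refine le_trans ?_ h2
    gcongr
  have e3 : Mr = L * W * 2 ^ (j + 1) := by rw [hMr, h4t]; ring
  have hLW : 0 < (L : ℝ) * W := by positivity
  -- first half
  have f1 : D * (Mr * ((3 * n + 1) * G + c + 2 * g)) < H * (L * W) / 2 := by
    have : D * (Mr * ((3 * n + 1) * G + c + 2 * g)) =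
      ((D : ℝ) * ((3 * n + 1) * G + c + 2 * g) * 2 ^ (j + 2)) * (L * W) / 2 := by
      rw [e3, pow_succ _ (j + 1)]; ring
    rw [this]
    gcongr
  have f2 : D * (4 * c * L * (H * 2 ^ t)) ≤ H * (L * W) / 2 := by
    have q1 : D * (4 * c * L * (H * 2 ^ t)) * 2 ^ (j + 2) ≤ (H * (L * W) / 2) * 2 ^ (j + 2) := by
      calc _ = (4 * c * D * 2 ^ (j + 2)) * (L * (H * 2 ^ t)) := by ring
        _ ≤ 2 ^ t * (L * (H * 2 ^ t)) := by gcongr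
        _ = (2 ^ t * 2 ^ t) * (L * H) := by ring
        _ = (W * 2 ^ (j + 1)) * (L * H) := by rw [h22, h4t]
        _ = _ := by rw [pow_succ _ (j + 1)]; ring
    exact le_of_mul_le_mul_right q1 (by positivity)
  have f3 := mul_le_mul_of_nonneg_left hS (Nat.cast_nonneg (α := ℝ) D)
  rw [mul_add]
  linarith [f1, f2, f3]

lemma bk_siegel (K : Type) [Field K] [NumberField K] : ∃ C : ℝ, 1 ≤ C ∧
    ∀ (R S : Type) [Fintype R] [Fintype S] [DecidableEq R] [DecidableEq S]
      (a : Matrix R S (𝓞 K)) (A : ℝ), a ≠ 0 → 0 < Fintype.card R →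
      Fintype.card S = 2 * Fintype.card R → (∀ k l, house (a k l : K) ≤ A) →
      ∃ ξ : S → 𝓞 K, ξ ≠ 0 ∧ (∀ k, ∑ l, ξ l * a k l = 0) ∧
        ∀ l, house (ξ l : K) ≤ C * (C * Fintype.card S * A) := by
  classical
  obtain ⟨c, hc⟩ : ∃ c : ℝ, ∀ (R S : Type) [Fintype R] [Fintype S] [DecidableEq R] [DecidableEq S]
      (a : Matrix R S (𝓞 K)) (A : ℝ), a ≠ 0 → 0 < Fintype.card R →
      Fintype.card R < Fintype.card S → (∀ k l, house (a k l : K) ≤ A) →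
      ∃ ξ : S → 𝓞 K, ξ ≠ 0 ∧ a.mulVec ξ = 0 ∧
        ∀ l, house (ξ l : K) ≤ c * (c * Fintype.card S * A) ^
          ((Fintype.card R : ℝ) / (Fintype.card S - Fintype.card R)) :=
    ⟨_, fun R S _ _ _ _ a A ha h1 h2 h3 =>
      house.exists_ne_zero_int_vec_house_le K a ha h1 h2 rfl h3 rfl⟩
  refine ⟨max 1 |c|, le_max_left _ _, fun R S _ _ _ _ a A ha h1 h2 h3 => ?_⟩
  obtain ⟨ξ, x1, x2, x3⟩ := hc R S a A ha h1 (by omega) h3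
  refine ⟨ξ, x1, fun k => ?_, fun l => ?_⟩
  · have := congrFun x2 k
    simp only [Matrix.mulVec, dotProduct, Pi.zero_apply] at this
    rw [← this]
    exact sum_congr rfl fun l _ => mul_comm _ _
  · have hA : 0 ≤ A := by
      obtain ⟨k⟩ := Fintype.card_pos_iff.1 h1
      exact (house_nonneg _).trans (h3 k l)
    have he : (Fintype.card R : ℝ) / (Fintype.card S - Fintype.card R) = 1 := by
      rw [h2]; push_cast
      have : (Fintype.card R : ℝ) ≠ 0 := by exact_mod_cast h1.ne'
      field_simp
      ring
    have := x3 l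
    rw [he, Real.rpow_one] at this
    refine this.trans ((le_abs_self _).trans ?_)
    rw [abs_mul, abs_mul, abs_mul, abs_of_nonneg hA, Nat.abs_cast]
    gcongr <;> exact le_max_right _ _

end

section
open Filter Topology Finset
open NumberField

lemma bk_ev (A B : ℝ) : ∀ᶠ t : ℕ in atTop, A + B * t < (4 : ℝ) ^ t := by
  have h0 := tendsto_pow_const_div_const_pow_of_one_lt 0 (r := (4:ℝ)) (by norm_num)
  have h1 := tendsto_pow_const_div_const_pow_of_one_lt 1 (r := (4:ℝ)) (by norm_num)
  have := (h0.const_mul A).add (h1.const_mul B)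
  simp only [mul_zero, add_zero] at this
  filter_upwards [this.eventually (gt_mem_nhds (show (0:ℝ) < 1 by norm_num))] with t ht
  have h4 : (0:ℝ) < 4 ^ t := by positivity
  rw [pow_zero, pow_one, mul_div_assoc', mul_div_assoc', ← add_div, div_lt_one h4] at ht
  linarith

section
variable {K : Type} [Field K] [NumberField K] (φ : K →+* ℂ) {ι : Type} [Fintype ι] [DecidableEq ι]
  (i0 : ι) (α b : ι → 𝓞 K) (ℓ : ι → ℂ)

lemma bk_inj (hlin : ∀ c : ι → ℤ, ∑ i, (c i : ℂ) * ℓ i = 0 → c = 0) (L : ℕ) :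
    Function.Injective (fun lam : ι → Fin L => bkL ℓ (fun i => (lam i : ℕ))) := by
  intro x y hxy
  have := hlin (fun i => ((x i : ℕ) : ℤ) - ((y i : ℕ) : ℤ)) (by
    simp only [bkL] at hxy
    push_cast
    simp only [sub_mul]
    rw [sum_sub_distrib, hxy, sub_self])
  ext i
  have := congrFun this i
  simp at this
  omega

lemma bk_class (hlin : ∀ c : ι → ℤ, ∑ i, (c i : ℂ) * ℓ i = 0 → c = 0) (L : ℕ) (c : ℝ)
    (hs : BkSize i0 α b ℓ L c) (μ : ι → Fin L) :
    ((univ.filter (fun s : ι → Fin L => Complex.exp (bkL ℓ (fun i => (s i : ℕ))) =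
      Complex.exp (bkL ℓ (fun i => (μ i : ℕ))))).card : ℝ) ≤ 3 * (c * L) := by
  have hL1 : (1 : ℝ) ≤ L := by exact_mod_cast hs.hL
  have hcL : 1 ≤ c * L := one_le_mul_of_one_le_of_one_le hs.hc hL1
  set cl := univ.filter (fun s : ι → Fin L => Complex.exp (bkL ℓ (fun i => (s i : ℕ))) =
      Complex.exp (bkL ℓ (fun i => (μ i : ℕ)))) with hcl
  have hk : ∀ s : ι → Fin L, ∃ k : ℤ, s ∈ cl → bkL ℓ (fun i => (s i : ℕ)) =
      bkL ℓ (fun i => (μ i : ℕ)) + k * (2 * Real.pi * Complex.I) := by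
    intro s
    by_cases h : s ∈ cl
    · rw [hcl, mem_filter, Complex.exp_eq_exp_iff_exists_int] at h
      obtain ⟨k, hk⟩ := h.2
      exact ⟨k, fun _ => hk⟩
    · exact ⟨0, fun h' => absurd h' h⟩
  choose k hk using hk
  have hcard : cl.card ≤ (Icc (-(⌊c * L⌋₊ : ℤ)) ⌊c * L⌋₊).card := by
    refine card_le_card_of_injOn k ?_ ?_
    · intro s hs'
      have h1 := hk s hs'
      have h2 : ‖(k s : ℂ) * (2 * Real.pi * Complex.I)‖ ≤ c * L + c * L := by
        have : (k s : ℂ) * (2 * Real.pi * Complex.I) = bkL ℓ (fun i => (s i : ℕ)) -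
          bkL ℓ (fun i => (μ i : ℕ)) := by rw [h1]; ring
        rw [this]
        exact (norm_sub_le _ _).trans (add_le_add (hs.hl s) (hs.hl μ))
      have h3 : ‖(k s : ℂ) * (2 * Real.pi * Complex.I)‖ = |(k s : ℝ)| * (2 * Real.pi) := by
        rw [norm_mul]
        simp [abs_of_pos Real.pi_pos]
      rw [h3] at h2
      have h4 : |(k s : ℝ)| ≤ c * L := by
        nlinarith [Real.pi_gt_three, abs_nonneg (k s : ℝ)]
      have h5 : ((k s).natAbs : ℝ) ≤ c * L := by
        rw [Nat.cast_natAbs]; exact_mod_cast h4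
      have h6 := Nat.le_floor h5
      simp only [coe_Icc, Set.mem_Icc]
      omega
    · intro s hs' s' hs'' he
      apply bk_inj ℓ hlin L
      simp only
      rw [hk s hs', hk s' hs'', he]
  have h7 : (Icc (-(⌊c * L⌋₊ : ℤ)) ⌊c * L⌋₊).card = 2 * ⌊c * L⌋₊ + 1 := by
    rw [Int.card_Icc]; omega
  rw [h7] at hcard
  have h8 : (⌊c * L⌋₊ : ℝ) ≤ c * L := Nat.floor_le (by linarith)
  have h9 : (cl.card : ℝ) ≤ 2 * ⌊c * L⌋₊ + 1 := by exact_mod_cast hcard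
  linarith

/-- Initial construction via Siegel's lemma. -/
lemma bk_init : ∃ C : ℝ, 1 ≤ C ∧ ∀ (L M h : ℕ) (c : ℝ), BkSize i0 α b ℓ L c → 0 < M → 0 < h →
    L ^ Fintype.card ι = 2 * (M ^ (Fintype.card ι - 1) * h) →
    ∃ p : (ι → Fin L) → 𝓞 K, p ≠ 0 ∧ (∀ lam, ∀ σ : K →+* ℂ, ‖σ (p lam)‖ ≤
      C * (C * (L : ℝ) ^ Fintype.card ι * ((c * L) ^ (Fintype.card ι * M) *
        Real.exp (c * L * h)))) ∧
      ∀ l < h, ∀ m : ι → ℕ, ∑ i, m i < M → bkX i0 α b p m l = 0 := by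
  obtain ⟨C, hC, hsieg⟩ := bk_siegel K
  refine ⟨C, hC, fun L M h c hs hM hh hcount => ?_⟩
  have hL1 : (1 : ℝ) ≤ L := by exact_mod_cast hs.hL
  have hcL : 1 ≤ c * L := one_le_mul_of_one_le_of_one_le hs.hc hL1
  have hc0 : 0 ≤ c := by linarith [hs.hc]
  let ext (m : {i : ι // i ≠ i0} → Fin M) (i : ι) : ℕ := if hi : i ≠ i0 then m ⟨i, hi⟩ else 0
  have hext : ∀ m i, ext m i ≤ M := by
    intro m i
    simp only [ext]
    split_ifs
    · exact (m _).2.le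
    · omega
  let a : Matrix (({i : ι // i ≠ i0} → Fin M) × Fin h) (ι → Fin L) (𝓞 K) := fun k lam =>
    bkA i0 α b (fun i => (lam i : ℕ)) (ext k.1) k.2
  have hcR : Fintype.card (({i : ι // i ≠ i0} → Fin M) × Fin h) =
      M ^ (Fintype.card ι - 1) * h := by
    simp
  have hcS : Fintype.card (ι → Fin L) = L ^ Fintype.card ι := by simp
  obtain ⟨p, hp0, hp1, hp2⟩ := hsieg _ _ a ((c * L) ^ (Fintype.card ι * M) * Real.exp (c * L * h))
    (by
      intro h0
      have := congrFun (congrFun h0 (fun _ => ⟨0, hM⟩, ⟨0, hh⟩)) (fun _ => ⟨0, hs.hL⟩)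
      simp [a, bkA, ext] at this)
    (by rw [hcR]; positivity) (by rw [hcR, hcS, hcount])
    (by
      intro k lam
      rw [bk_house_le]
      intro σ
      simp only [a, bkA]
      push_cast
      simp only [map_mul, map_prod, map_pow]
      rw [norm_mul]
      gcongr
      · rw [norm_prod]
        calc _ ≤ ∏ i : ι, (c * L) ^ M := by
              refine prod_le_prod (fun _ _ => norm_nonneg _) fun i _ => ?_
              rw [norm_pow]
              refine (pow_le_pow_left₀ (norm_nonneg _) (hs.hv lam i σ) _).trans ?_
              exact pow_le_pow_right₀ hcL (hext _ _)
          _ = _ := by rw [prod_const, card_univ, ← pow_mul, mul_comm M]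
      · refine (hs.ha lam k.2 σ).trans ?_
        gcongr
        exact k.2.2.le)
  refine ⟨p, hp0, ?_, ?_⟩
  · intro lam σ
    refine (norm_embedding_le_house _ σ).trans ((hp2 lam).trans ?_)
    rw [hcS]; push_cast; rfl
  · intro l hl m hm
    by_cases hm0 : m i0 = 0
    · have := hp1 (fun i => ⟨m i, lt_of_le_of_lt
        (single_le_sum (f := m) (fun _ _ => Nat.zero_le _) (mem_univ (i : ι))) hm⟩, ⟨l, hl⟩)
      rw [bkX, ← this]
      refine sum_congr rfl fun lam _ => ?_
      congr 2
      ext i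
      by_cases hi : i = i0
      · subst hi; simp [ext, hm0]
      · simp [ext, hi]
    · rw [bkX]
      refine sum_eq_zero fun lam _ => ?_
      have : bkA i0 α b (fun i => (lam i : ℕ)) m l = 0 := by
        rw [bkA, prod_eq_zero (mem_univ i0), zero_mul]
        simp [bkV, hm0]
      rw [this, mul_zero]

theorem bk_baker (hα : ∀ i, Complex.exp (ℓ i) = φ (α i)) (hrel : ∑ i, φ (b i) * ℓ i = 0)
    (hb : b i0 ≠ 0) (hlin : ∀ c : ι → ℤ, ∑ i, (c i : ℂ) * ℓ i = 0 → c = 0) : False := by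
  obtain ⟨c, hsize⟩ := bk_size_exists i0 α b ℓ
  obtain ⟨C, hC, hinit⟩ := bk_init i0 α b ℓ
  set n := Fintype.card ι with hn
  have hn1 : 1 ≤ n := Fintype.card_pos_iff.2 ⟨i0⟩
  set D := Module.finrank ℚ K with hD
  set J := 2 * n ^ 2 + n with hJ
  have hc : 1 ≤ c := (hsize 1 le_rfl).hc
  have e1 := bk_ev ((2 : ℝ) ^ (J + 1) * D * ((3 * n + 1) * Real.log (2 * c) + c + 2 * Real.log C))
    ((2 : ℝ) ^ (J + 1) * D * ((3 * n + 1) * (2 * n)))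
  have e2 := bk_ev (3 * c * 2 ^ J) 0
  have e3 : ∀ᶠ t : ℕ in atTop, 4 * c * D * 2 ^ (J + 1) ≤ (2 : ℝ) ^ t :=
    (tendsto_pow_atTop_atTop_of_one_lt (by norm_num : (1:ℝ) < 2)).eventually_ge_atTop _
  obtain ⟨t, ⟨⟨he1, he2⟩, he3⟩, hJt⟩ := (((e1.and e2).and e3).and (eventually_ge_atTop J)).exists
  have ht1 : 1 ≤ t := by omega
  obtain ⟨L, hL⟩ : ∃ L : ℕ, L = 2 * (4 ^ t) ^ n := ⟨_, rfl⟩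
  have hLpos : 1 ≤ L := by rw [hL]; have : 0 < ((4 ^ t) ^ n : ℕ) := by positivity
                           omega
  have hs := hsize L hLpos
  have h4 : (2 : ℕ) ^ (2 * t) = 4 ^ t := by rw [pow_mul]; norm_num
  obtain ⟨p, hp0, hpb, hpv⟩ := hinit L (L * 2 ^ (2 * t)) (4 ^ t) c hs (by positivity) (by positivity)
    (by
      obtain ⟨k, hk⟩ : ∃ k, n = k + 1 := ⟨n - 1, by omega⟩
      rw [hk] at hL ⊢
      rw [Nat.add_sub_cancel, h4]
      rw [pow_succ L k, mul_pow]
      conv_lhs => rw [mul_comm]; arg 1; rw [hL]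
      ring)
  have main : ∀ j ≤ J, ∀ l < 2 ^ (2 * t + t * j), ∀ m : ι → ℕ, ∑ i, m i < L * 2 ^ (2 * t - j) →
      bkX i0 α b p m l = 0 := by
    intro j
    induction j with
    | zero =>
      intro _ l hl m hm
      refine hpv l ?_ m (by simpa using hm)
      rw [← h4]; simpa using hl
    | succ j ih =>
      intro hj
      refine bk_extrap φ i0 α b ℓ hα hrel hb hs p _ hpb (2 ^ (2 * t + t * j))
        (2 ^ (2 * t + t * (j + 1))) (L * 2 ^ (2 * t - (j + 1))) ?_ (by positivity) ?_ ?_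
      · apply Nat.pow_le_pow_right (by norm_num)
        rw [mul_add]; omega
      · intro l hl m hm
        refine ih (by omega) l hl m (lt_of_lt_of_eq hm ?_)
        have : 2 * t - j = (2 * t - (j + 1)) + 1 := by omega
        rw [this, pow_succ]; ring
      · have := bk_num n D J t j (by omega) (by omega) c C hc hC L hL (by
          refine lt_of_eq_of_lt ?_ he1
          ring) he3
        push_cast at this ⊢
        exact this
  have hfin := main J le_rfl
  have hw := bk_zero_est (fun lam => φ (p lam)) (fun lam : ι → Fin L => bkL ℓ (fun i => (lam i : ℕ)))
    (bk_inj ℓ hlin L) (2 ^ (2 * t + t * J)) (L * 2 ^ (2 * t - J)) (by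
      intro l hl k hk
      have := bk_vanish φ i0 α b ℓ hα hrel hb p _ l (hfin l hl) k (fun _ => 0) (by simpa using hk)
      simpa using this) (by
      rw [show Fintype.card (ι → Fin L) = L ^ n by simp [hn]]
      rw [hL, ← h4, mul_pow, ← pow_mul, ← pow_mul, ← pow_add]
      apply Nat.pow_le_pow_right (by norm_num)
      rw [hJ]
      nlinarith [Nat.zero_le n]) (by
      intro μ
      have h1 := bk_class i0 α b ℓ hlin L c hs μ
      have h2 : (3 * (c * L) : ℝ) ≤ ((L * 2 ^ (2 * t - J) : ℕ) : ℝ) := by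
        have h5 : (2 : ℝ) ^ (2 * t - J) * 2 ^ J = 4 ^ t := by
          rw [← pow_add, Nat.sub_add_cancel (by omega)]; exact_mod_cast h4
        have h6 : 3 * c ≤ (2 : ℝ) ^ (2 * t - J) := by
          refine le_of_mul_le_mul_right (a := (2:ℝ) ^ J) ?_ (by positivity)
          rw [h5]; linarith
        push_cast
        calc (3 * (c * L) : ℝ) = L * (3 * c) := by ring
          _ ≤ _ := by gcongr
      exact_mod_cast h1.trans h2)
  apply hp0
  ext lam
  have := congrFun hw lam
  simpa using this

end

end

section
open Filter Topology Finset
open NumberField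

theorem bk_galois {K : Type} [Field K] [NumberField K] (φ : K →+* ℂ) {ι : Type} [Fintype ι]
    (α : ι → 𝓞 K) (ℓ : ι → ℂ) (hα : ∀ i, Complex.exp (ℓ i) = φ (α i)) (c : ι → K)
    (hrel : ∑ i, φ (c i) * ℓ i = 0) (σ : K →+* K) : ∑ i, φ (σ (c i)) * ℓ i = 0 := by
  classical
  obtain ⟨s, hs, hspan, hli⟩ := exists_linearIndependent ℚ (Set.range ℓ)
  have hfin : s.Finite := (Set.finite_range ℓ).subset hs
  haveI : Fintype s := hfin.fintype
  have hr : ∀ i, ∃ r : s → ℚ, ∑ j, r j • (j : ℂ) = ℓ i := by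
    intro i
    have : ℓ i ∈ Submodule.span ℚ (Set.range (fun j : s => (j : ℂ))) := by
      rw [Subtype.range_coe, hspan]
      exact Submodule.subset_span ⟨i, rfl⟩
    exact (Submodule.mem_span_range_iff_exists_fun ℚ).1 this
  choose r hr using hr
  have hidx : ∀ j : s, ∃ i, ℓ i = j := fun j => hs j.2
  choose idx hidx using hidx
  have key : ∀ τ : K →+* ℂ, ∑ i, τ (c i) * ℓ i = ∑ j : s, τ (∑ i, c i * (r i j : K)) * (j : ℂ) := by
    intro τ
    simp only [map_sum, map_mul, map_ratCast, sum_mul]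
    rw [sum_comm]
    refine sum_congr rfl fun i _ => ?_
    rw [← hr i, mul_sum]
    refine sum_congr rfl fun j _ => ?_
    rw [Rat.smul_def]; ring
  have hd : ∀ j : s, ∑ i, c i * (r i j : K) = 0 := by
    by_contra hne
    push Not at hne
    obtain ⟨j0, hj0⟩ := hne
    obtain ⟨a, ha⟩ := IsLocalization.exist_integer_multiples_of_finite
      (nonZeroDivisors (𝓞 K)) (fun j : s => ∑ i, c i * (r i j : K))
    choose b hb using ha
    have ha0 : ((a : 𝓞 K) : K) ≠ 0 := by
      have := nonZeroDivisors.coe_ne_zero a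
      exact_mod_cast this
    have hb' : ∀ j, (b j : K) = ((a : 𝓞 K) : K) * ∑ i, c i * (r i j : K) := by
      intro j
      have := hb j
      rw [Algebra.smul_def] at this
      exact this
    refine bk_baker φ j0 (fun j => α (idx j)) b (fun j : s => (j : ℂ)) ?_ ?_ ?_ ?_
    · intro j; rw [← hidx j, hα]
    · simp only [hb', map_mul, mul_assoc]
      rw [← mul_sum, ← key φ, hrel, mul_zero]
    · intro h
      have := hb' j0
      rw [h] at this
      exact mul_ne_zero ha0 hj0 (by rw [← this]; simp)
    · intro e he
      have := Fintype.linearIndependent_iff.1 hli (fun j => (e j : ℚ)) (by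
        simpa [Rat.smul_def] using he)
      ext j
      exact_mod_cast this j
  have := key (φ.comp σ)
  simp only [hd, map_zero, zero_mul, sum_const_zero] at this
  simpa using this

end

section
open Filter Topology Finset
open NumberField

noncomputable def edF {q : ℕ} [NeZero q] (g : ZMod q → ℂ) (a : ZMod q) : ℂ :=
  ∑ m, ZMod.stdAddChar (-(m * a)) * g m

theorem ed_inv {q : ℕ} [NeZero q] (g : ZMod q → ℂ) (n : ZMod q) :
    g n = (q : ℂ)⁻¹ * ∑ a, ZMod.stdAddChar (a * n) * edF g a := by
  have h := ZMod.invDFT_apply (ZMod.dft g) n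
  rw [LinearEquiv.symm_apply_apply] at h
  rw [h]
  simp [edF, ZMod.dft_apply, smul_eq_mul]

theorem ed_psum {q : ℕ} [NeZero q] (g : ZMod q → ℂ) (x : ℝ) (hx0 : 0 ≤ x) (hx : x < 1) :
    HasSum (fun n : ℕ => g n / n * (x : ℂ) ^ n)
      (-(q : ℂ)⁻¹ * ∑ a, edF g a * Complex.log (1 - ZMod.stdAddChar a * x)) := by
  have h1 : ∀ a : ZMod q, HasSum (fun n : ℕ => (ZMod.stdAddChar a * (x : ℂ)) ^ n / n)
      (-Complex.log (1 - ZMod.stdAddChar a * x)) := by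
    intro a
    apply Complex.hasSum_taylorSeries_neg_log
    rw [norm_mul, ZMod.stdAddChar_apply, Circle.norm_coe, one_mul, Complex.norm_real,
      Real.norm_of_nonneg hx0]
    exact hx
  have h2 := (hasSum_sum (s := univ) (fun a _ => (h1 a).mul_left (edF g a))).mul_left ((q : ℂ)⁻¹)
  have h3 : (-(q : ℂ)⁻¹ * ∑ a, edF g a * Complex.log (1 - ZMod.stdAddChar a * x)) =
      (q : ℂ)⁻¹ * ∑ a, edF g a * -Complex.log (1 - ZMod.stdAddChar a * x) := by
    simp
  rw [h3]
  refine h2.congr_fun ?_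
  · intro n
    rw [ed_inv g (n : ZMod q), mul_sum, mul_sum, sum_div, sum_mul]
    refine sum_congr rfl fun a _ => ?_
    have : ZMod.stdAddChar (a * (n : ZMod q)) = (ZMod.stdAddChar a : ℂ) ^ n := by
      rw [← AddChar.map_nsmul_eq_pow, nsmul_eq_mul, mul_comm]
    rw [this, mul_pow]
    ring

theorem ed_log {q : ℕ} [NeZero q] (a : ZMod q) (ha : a ≠ 0) :
    (1 - ZMod.stdAddChar a : ℂ) ∈ Complex.slitPlane := by
  have hn : ‖(ZMod.stdAddChar a : ℂ)‖ = 1 := by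
    rw [ZMod.stdAddChar_apply, Circle.norm_coe]
  have h1 : (ZMod.stdAddChar a : ℂ) ≠ 1 := by
    intro h
    apply ha
    apply ZMod.injective_stdAddChar
    simpa using h
  left
  have h2 := Complex.re_le_norm (ZMod.stdAddChar a : ℂ)
  have : (ZMod.stdAddChar a : ℂ).re ≠ 1 := by
    intro h
    apply h1
    have h3 := Complex.sq_norm (ZMod.stdAddChar a : ℂ)
    rw [Complex.normSq_apply, hn, h] at h3
    apply Complex.ext
    · simpa using h
    · simp only [Complex.one_im]
      nlinarith
  have h4 : (ZMod.stdAddChar a : ℂ).re < 1 := lt_of_le_of_ne (by rw [hn] at h2; exact h2) this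
  simp; exact h4

theorem ed_abel {q : ℕ} [NeZero q] (g : ZMod q → ℂ) (L : ℂ)
    (h : Tendsto (fun n => ∑ i ∈ range n, g i / (i : ℂ)) atTop (𝓝 L)) :
    Tendsto (fun x : ℝ => -(q : ℂ)⁻¹ * ∑ a, edF g a * Complex.log (1 - ZMod.stdAddChar a * x))
      (𝓝[<] 1) (𝓝 L) := by
  have h1 := Complex.tendsto_tsum_powerSeries_nhdsWithin_lt h
  rw [tendsto_map'_iff] at h1
  refine h1.congr' ?_
  filter_upwards [Ioo_mem_nhdsLT (show (0:ℝ) < 1 by norm_num)] with x hx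
  exact (ed_psum g x hx.1.le hx.2).tsum_eq

theorem ed_lim_ne {q : ℕ} [NeZero q] (g : ZMod q → ℂ) :
    Tendsto (fun x : ℝ => ∑ a ∈ univ.erase (0 : ZMod q),
      edF g a * Complex.log (1 - ZMod.stdAddChar a * x)) (𝓝[<] 1)
      (𝓝 (∑ a ∈ univ.erase (0 : ZMod q), edF g a * Complex.log (1 - ZMod.stdAddChar a))) := by
  refine tendsto_finsetSum _ fun a ha => ?_
  refine Tendsto.const_mul _ ?_
  have : ContinuousAt (fun x : ℝ => Complex.log (1 - ZMod.stdAddChar a * x)) 1 := by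
    refine ContinuousAt.clog (by fun_prop) ?_
    simpa using ed_log a (ne_of_mem_erase ha)
  have h := this.tendsto.mono_left (nhdsWithin_le_nhds (s := Set.Iio 1))
  simpa using h

theorem ed_sum_zero {q : ℕ} [NeZero q] (g : ZMod q → ℂ) (L : ℂ)
    (h : Tendsto (fun n => ∑ i ∈ range n, g i / (i : ℂ)) atTop (𝓝 L)) : edF g 0 = 0 := by
  by_contra hne
  have h1 := ed_abel g L h
  have h2 := (ed_lim_ne g)
  have h3 := (h1.const_mul (-(q : ℂ))).sub h2
  have h4 : Tendsto (fun x : ℝ => edF g 0 * Complex.log (1 - x)) (𝓝[<] 1) (𝓝 (-(q : ℂ) * L -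
    (∑ a ∈ univ.erase (0 : ZMod q), edF g a * Complex.log (1 - ZMod.stdAddChar a)))) := by
    refine h3.congr fun x => ?_
    rw [← add_sum_erase univ _ (mem_univ (0 : ZMod q)), ← mul_assoc, neg_mul_neg]
    have : (q : ℂ) ≠ 0 := by exact_mod_cast NeZero.ne q
    rw [mul_inv_cancel₀ this]
    simp
  have h5 := (h4.const_mul (edF g 0)⁻¹).norm
  have h6 : Tendsto (fun x : ℝ => |Real.log (1 - x)|) (𝓝[<] 1) atTop := by
    apply tendsto_abs_atBot_atTop.comp
    refine Real.tendsto_log_nhdsGT_zero.comp ?_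
    refine tendsto_nhdsWithin_iff.2 ⟨?_, ?_⟩
    · have : ContinuousAt (fun x : ℝ => 1 - x) 1 := by fun_prop
      simpa using this.tendsto.mono_left (nhdsWithin_le_nhds (s := Set.Iio 1))
    · filter_upwards [self_mem_nhdsWithin] with x hx
      simpa using hx
  refine not_tendsto_nhds_of_tendsto_atTop h6 _ (h5.congr' ?_)
  filter_upwards [self_mem_nhdsWithin] with x hx
  rw [← mul_assoc, inv_mul_cancel₀ hne, one_mul]
  have : (1 - (x : ℂ)) = ((1 - x : ℝ) : ℂ) := by push_cast; rfl
  rw [this, ← Complex.ofReal_log (by simp at hx; linarith), Complex.norm_real, Real.norm_eq_abs]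

theorem ed_val {q : ℕ} [NeZero q] (g : ZMod q → ℂ) (L : ℂ)
    (h : Tendsto (fun n => ∑ i ∈ range n, g i / (i : ℂ)) atTop (𝓝 L)) :
    L = -(q : ℂ)⁻¹ * ∑ a ∈ univ.erase (0 : ZMod q), edF g a * Complex.log (1 - ZMod.stdAddChar a) := by
  refine tendsto_nhds_unique (ed_abel g L h) (((ed_lim_ne g).const_mul (-(q : ℂ)⁻¹)).congr ?_)
  intro x
  rw [← add_sum_erase univ _ (mem_univ (0 : ZMod q)), ed_sum_zero g L h]
  simp

theorem ed_galois_aux (K : Type) [Field K] [NumberField K] {q : ℕ} [NeZero q]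
    [IsCyclotomicExtension {q} ℚ K] (g : ZMod q → ℤ) (h : (ZMod q)ˣ)
    (hrel : ∑ a ∈ univ.erase (0 : ZMod q),
      edF (fun x => (g x : ℂ)) a * Complex.log (1 - ZMod.stdAddChar a) = 0) :
    ∑ a ∈ univ.erase (0 : ZMod q),
      edF (fun x => (g ((h : ZMod q) * x) : ℂ)) a * Complex.log (1 - ZMod.stdAddChar a) = 0 := by
  have hz : IsPrimitiveRoot (IsCyclotomicExtension.zeta q ℚ K) q :=
    IsCyclotomicExtension.zeta_spec q ℚ K
  set z := IsCyclotomicExtension.zeta q ℚ K with hzdef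
  have hirr := Polynomial.cyclotomic.irreducible_rat (NeZero.pos q)
  have hw : IsPrimitiveRoot (ZMod.stdAddChar (1 : ZMod q) : ℂ) q := by
    have := Complex.isPrimitiveRoot_exp q (NeZero.ne q)
    have h2 := ZMod.stdAddChar_coe (N := q) 1
    simp only [Int.cast_one, mul_one] at h2
    rw [h2]; exact this
  obtain ⟨φ, hφ⟩ : ∃ φ : K →ₐ[ℚ] ℂ, φ z = ZMod.stdAddChar (1 : ZMod q) := by
    obtain ⟨φ, hφ⟩ := (hz.embeddingsEquivPrimitiveRoots ℂ hirr).surjective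
      ⟨_, (mem_primitiveRoots (NeZero.pos q)).2 hw⟩
    exact ⟨φ, by rw [← IsPrimitiveRoot.embeddingsEquivPrimitiveRoots_apply_coe hz ℂ hirr φ, hφ]⟩
  set k := ((h⁻¹ : (ZMod q)ˣ) : ZMod q).val with hk
  have hkc : (k : ZMod q) = ((h⁻¹ : (ZMod q)ˣ) : ZMod q) := by rw [hk, ZMod.natCast_zmod_val]
  have hkcop : k.Coprime q := ZMod.val_coe_unit_coprime _
  obtain ⟨σ, hσ⟩ : ∃ σ : K →ₐ[ℚ] K, σ z = z ^ k := by
    obtain ⟨φ, hφ⟩ := (hz.embeddingsEquivPrimitiveRoots K hirr).surjective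
      ⟨_, (mem_primitiveRoots (NeZero.pos q)).2 (hz.pow_of_coprime k hkcop)⟩
    exact ⟨φ, by rw [← IsPrimitiveRoot.embeddingsEquivPrimitiveRoots_apply_coe hz K hirr φ, hφ]⟩
  have hpow : ∀ a : ZMod q, (ZMod.stdAddChar a : ℂ) = φ (z ^ a.val) := by
    intro a
    rw [map_pow, hφ, ← AddChar.map_nsmul_eq_pow]
    simp
  have hstd : ∀ a : ZMod q, (ZMod.stdAddChar a : ℂ) = φ (z ^ a.val) := hpow
  let zi : 𝓞 K := ⟨z, hz.isIntegral (NeZero.pos q)⟩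
  let c : (univ.erase (0 : ZMod q)) → K := fun a => ∑ m, z ^ (-(m * (a : ZMod q))).val * (g m : K)
  have hc : ∀ a, φ (c a) = edF (fun x => (g x : ℂ)) a := by
    intro a
    simp only [c, edF, map_sum, map_mul, map_intCast, hpow]
  have hc2 : ∀ a, φ (σ (c a)) = edF (fun x => (g ((h : ZMod q) * x) : ℂ)) a := by
    intro a
    simp only [c, edF, map_sum, map_mul, map_intCast]
    rw [← Equiv.sum_comp (Units.mulLeft h)]
    refine sum_congr rfl fun m _ => ?_
    rw [Units.mulLeft_apply]
    congr 1
    rw [map_pow, hσ, map_pow, map_pow, hφ, ← pow_mul, ← AddChar.map_nsmul_eq_pow]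
    congr 1
    rw [nsmul_eq_mul, Nat.cast_mul, hkc, ZMod.natCast_zmod_val, mul_one]
    calc _ = -((h * (h⁻¹ : (ZMod q)ˣ) : ZMod q) * (m * a)) := by ring
      _ = _ := by rw [Units.mul_inv, one_mul]
  have := bk_galois (K := K) φ.toRingHom (fun a : univ.erase (0 : ZMod q) => 1 - zi ^ (a : ZMod q).val)
    (fun a => Complex.log (1 - ZMod.stdAddChar (a : ZMod q))) (by
      intro a
      rw [Complex.exp_log (Complex.slitPlane_ne_zero (ed_log _ (ne_of_mem_erase a.2)))]
      have h5 : algebraMap (𝓞 K) K zi = z := rfl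
      simp [map_pow, h5, hpow]) c (by
      rw [← hrel, ← sum_coe_sort (univ.erase (0 : ZMod q))]
      exact sum_congr rfl fun a _ => by rw [← hc]; rfl) σ.toRingHom
  rw [← this, ← sum_coe_sort (univ.erase (0 : ZMod q))]
  exact sum_congr rfl fun a _ => by rw [← hc2]; rfl

theorem ed_galois {q : ℕ} [NeZero q] (g : ZMod q → ℤ) (h : (ZMod q)ˣ)
    (hrel : ∑ a ∈ univ.erase (0 : ZMod q),
      edF (fun x => (g x : ℂ)) a * Complex.log (1 - ZMod.stdAddChar a) = 0) :
    ∑ a ∈ univ.erase (0 : ZMod q),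
      edF (fun x => (g ((h : ZMod q) * x) : ℂ)) a * Complex.log (1 - ZMod.stdAddChar a) = 0 := by
  have : NeZero ((q : ℕ) : ℚ) := NeZero.charZero
  have h1 : IsCyclotomicExtension {q} ℚ (CyclotomicField q ℚ) :=
    CyclotomicField.isCyclotomicExtension q ℚ
  have h2 : NumberField (CyclotomicField q ℚ) := IsCyclotomicExtension.numberField {q} ℚ _
  exact ed_galois_aux (CyclotomicField q ℚ) g h hrel

end

section
open Filter Topology Finset
open NumberField

theorem ed_rpow_diff (a s : ℝ) (ha : 1 ≤ a) (hs1 : 1 ≤ s) (hs2 : s ≤ 2) :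
    |a ^ (-s) - (a + 1) ^ (-s)| ≤ 2 * (1 / a ^ 2) := by
  have ha0 : 0 < a := by linarith
  have h1 : (a + 1) ^ (-s) ≤ a ^ (-s) := Real.rpow_le_rpow_of_nonpos ha0 (by linarith) (by linarith)
  rw [abs_of_nonneg (by linarith)]
  have h2 : (a + 1) ^ (-s) = a ^ (-s) * (1 + (-1 / (a + 1))) ^ s := by
    have : 1 + (-1 / (a + 1)) = a / (a + 1) := by field_simp; ring
    rw [this, Real.div_rpow ha0.le (by linarith), Real.rpow_neg ha0.le, Real.rpow_neg (by linarith)]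
    have := Real.rpow_pos_of_pos ha0 s
    field_simp
  have h3 : 1 + s * (-1 / (a + 1)) ≤ (1 + (-1 / (a + 1))) ^ s := by
    apply one_add_mul_self_le_rpow_one_add _ hs1
    rw [le_div_iff₀ (by linarith)]; linarith
  have h4 : a ^ (-s) ≤ a⁻¹ := by
    rw [← Real.rpow_neg_one]
    exact Real.rpow_le_rpow_of_exponent_le ha (by linarith)
  have h5 : 0 < a ^ (-s) := Real.rpow_pos_of_pos ha0 _
  have h6 : s / (a + 1) ≤ 2 * a⁻¹ := by
    rw [← div_eq_mul_inv]
    gcongr; linarith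
  calc a ^ (-s) - (a + 1) ^ (-s) = a ^ (-s) * (1 - (1 + (-1 / (a + 1))) ^ s) := by rw [h2]; ring
    _ ≤ a ^ (-s) * (s / (a + 1)) := by
        apply mul_le_mul_of_nonneg_left _ h5.le
        have : s * (-1 / (a + 1)) = - (s / (a + 1)) := by ring
        linarith
    _ ≤ a⁻¹ * (2 * a⁻¹) := by gcongr
    _ = _ := by field_simp

theorem ed_parts (z : ℕ → ℂ) (b : ℝ) (hb : ∀ n, ‖∑ i ∈ range n, z i‖ ≤ b) :
    ∃ T : ℝ → ℂ, (∀ s, 1 ≤ s → s ≤ 2 →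
      Tendsto (fun N => ∑ i ∈ range N, z i * (((i + 1 : ℝ) ^ (-s) : ℝ) : ℂ)) atTop (𝓝 (T s))) ∧
      Tendsto T (𝓝[>] 1) (𝓝 (T 1)) := by
  have hb0 : 0 ≤ b := (norm_nonneg _).trans (hb 0)
  let c : ℕ → ℝ → ℂ := fun i s => (∑ j ∈ range (i + 1), z j) *
    (((i + 1 : ℝ) ^ (-s) - (i + 1 + 1 : ℝ) ^ (-s) : ℝ) : ℂ)
  have hc : ∀ i s, 1 ≤ s → s ≤ 2 → ‖c i s‖ ≤ b * (2 * (1 / ((i + 1 : ℕ) : ℝ) ^ 2)) := by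
    intro i s h1 h2
    simp only [c]
    rw [norm_mul, Complex.norm_real, Real.norm_eq_abs]
    gcongr
    · exact hb _
    · push_cast
      exact ed_rpow_diff _ _ (by linarith [(Nat.cast_nonneg i : (0:ℝ) ≤ i)]) h1 h2
  have hsum : Summable (fun i : ℕ => b * (2 * (1 / ((i + 1 : ℕ) : ℝ) ^ 2))) := by
    refine Summable.mul_left _ (Summable.mul_left _ ?_)
    exact (summable_nat_add_iff (f := fun i : ℕ => 1 / (i : ℝ) ^ 2) 1).2
      (Real.summable_one_div_nat_pow.2 (by norm_num))
  refine ⟨fun s => ∑' i, c i s, ?_, ?_⟩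
  · intro s h1 h2
    have hS : Summable (fun i => c i s) := Summable.of_norm_bounded hsum (fun i => hc i s h1 h2)
    have h3 := hS.hasSum.tendsto_sum_nat
    have h4 : Tendsto (fun N : ℕ => (∑ i ∈ range N, z i) * (((N + 1 : ℝ) ^ (-s) : ℝ) : ℂ)) atTop (𝓝 0) := by
      have h5 : Tendsto (fun N : ℕ => b * (N + 1 : ℝ) ^ (-s)) atTop (𝓝 0) := by
        have := (tendsto_rpow_neg_atTop (show 0 < s by linarith)).comp
          (tendsto_atTop_add_const_right atTop (1:ℝ) tendsto_natCast_atTop_atTop)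
        simpa using this.const_mul b
      refine squeeze_zero_norm (fun N => ?_) h5
      rw [norm_mul, Complex.norm_real, Real.norm_of_nonneg (by positivity)]
      gcongr
      exact hb N
    have h6 := h4.add h3
    rw [zero_add] at h6
    refine h6.congr fun N => ?_
    induction N with
    | zero => simp
    | succ N ih =>
      rw [sum_range_succ (fun i => c i s), sum_range_succ (fun i => z i * _), ← ih]
      simp only [c]
      rw [sum_range_succ z]
      push_cast
      ring
  · refine tendsto_tsum_of_dominated_convergence hsum ?_ ?_
    · intro i
      have : ContinuousAt (c i) 1 := by
        refine ContinuousAt.mul continuousAt_const ?_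
        refine Complex.continuous_ofReal.continuousAt.comp ?_
        have e1 : (i + 1 : ℝ) ≠ 0 := by positivity
        have e2 : (i + 1 + 1 : ℝ) ≠ 0 := by positivity
        refine ContinuousAt.sub ?_ ?_
        · exact ContinuousAt.rpow continuousAt_const continuousAt_neg (Or.inl e1)
        · exact ContinuousAt.rpow continuousAt_const continuousAt_neg (Or.inl e2)
      exact this.tendsto.mono_left nhdsWithin_le_nhds
    · filter_upwards [Ioo_mem_nhdsGT (show (1:ℝ) < 2 by norm_num)] with s hs i
      exact hc i s hs.1.le hs.2.le

theorem ed_range_sum {q : ℕ} [NeZero q] (g : ZMod q → ℂ) :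
    ∑ i ∈ range q, g i = ∑ x, g x := by
  refine sum_bij (fun i _ => (i : ZMod q)) (fun _ _ => mem_univ _) ?_ ?_ (fun _ _ => rfl)
  · intro a ha b hb h
    rw [ZMod.natCast_eq_natCast_iff'] at h
    rwa [Nat.mod_eq_of_lt (mem_range.1 ha), Nat.mod_eq_of_lt (mem_range.1 hb)] at h
  · intro x _
    exact ⟨x.val, mem_range.2 (ZMod.val_lt x), ZMod.natCast_zmod_val x⟩

theorem ed_bdd {q : ℕ} [NeZero q] (g : ZMod q → ℂ) (hg : ∑ x, g x = 0) :
    ∃ b : ℝ, ∀ n, ‖∑ i ∈ range n, g ((i + 1 : ℕ) : ZMod q)‖ ≤ b := by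
  have hper : Function.Periodic (fun n : ℕ => ∑ i ∈ range n, g ((i + 1 : ℕ) : ZMod q)) q := by
    intro n
    simp only
    rw [sum_range_add, add_eq_left]
    have := ed_range_sum (fun x => g (((n + 1 : ℕ) : ZMod q) + x))
    rw [show ∑ x, g (((n + 1 : ℕ) : ZMod q) + x) = 0 from
      (Equiv.sum_comp (Equiv.addLeft ((n + 1 : ℕ) : ZMod q)) g).trans hg] at this
    rw [← this]
    refine sum_congr rfl fun i _ => ?_
    push_cast
    congr 1
    ring
  refine ⟨∑ i ∈ range q, ‖g ((i + 1 : ℕ) : ZMod q)‖, fun n => ?_⟩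
  have := hper.map_mod_nat n
  rw [← this]
  refine (norm_sum_le _ _).trans ?_
  refine sum_le_sum_of_subset_of_nonneg ?_ fun _ _ _ => norm_nonneg _
  exact range_subset_range.2 (Nat.mod_lt _ (NeZero.pos q)).le

theorem ed_summ {q : ℕ} [NeZero q] (g : ZMod q → ℂ) (s : ℝ) (hs : 1 < s) :
    Summable (fun n : ℕ => g n * (((n : ℝ) ^ (-s) : ℝ) : ℂ)) := by
  refine Summable.of_norm_bounded (g := fun n : ℕ => (∑ x, ‖g x‖) * (n : ℝ) ^ (-s)) ?_ ?_
  · exact (Real.summable_nat_rpow.2 (by linarith)).mul_left _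
  · intro n
    rw [norm_mul, Complex.norm_real, Real.norm_of_nonneg (by positivity)]
    gcongr
    exact single_le_sum (f := fun x => ‖g x‖) (fun _ _ => norm_nonneg _) (mem_univ _)

theorem ed_dir {q : ℕ} [NeZero q] (g : ZMod q → ℂ) (hg : ∑ x, g x = 0) :
    ∃ L : ℂ, Tendsto (fun n => ∑ i ∈ range n, g i / (i : ℂ)) atTop (𝓝 L) ∧
      Tendsto (fun s : ℝ => ∑' n : ℕ, g n * (((n : ℝ) ^ (-s) : ℝ) : ℂ)) (𝓝[>] 1) (𝓝 L) := by
  obtain ⟨b, hb⟩ := ed_bdd g hg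
  obtain ⟨T, hT, hT1⟩ := ed_parts _ b hb
  refine ⟨T 1, ?_, ?_⟩
  · rw [← tendsto_add_atTop_iff_nat 1]
    refine (hT 1 le_rfl (by norm_num)).congr fun N => ?_
    rw [sum_range_succ']
    simp only [Nat.cast_zero, div_zero, add_zero]
    refine sum_congr rfl fun i _ => ?_
    rw [Real.rpow_neg_one, div_eq_mul_inv]
    push_cast
    rfl
  · refine hT1.congr' ?_
    filter_upwards [Ioo_mem_nhdsGT (show (1:ℝ) < 2 by norm_num)] with s hs
    refine tendsto_nhds_unique (hT s hs.1.le hs.2.le) ?_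
    have h1 := (ed_summ g s hs.1).hasSum.tendsto_sum_nat
    rw [← tendsto_add_atTop_iff_nat 1] at h1
    refine h1.congr fun N => ?_
    rw [sum_range_succ']
    have : (0:ℝ) ^ (-s) = 0 := Real.zero_rpow (by linarith [hs.1])
    simp [this]

theorem ed_zero {q : ℕ} [NeZero q] (g : ZMod q → ℤ)
    (h0 : Tendsto (fun n => ∑ i ∈ range n, (g i : ℂ) / (i : ℂ)) atTop (𝓝 0)) (h : (ZMod q)ˣ) :
    Tendsto (fun s : ℝ => ∑' n : ℕ, (g ((h : ZMod q) * n) : ℂ) * (((n : ℝ) ^ (-s) : ℝ) : ℂ))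
      (𝓝[>] 1) (𝓝 0) := by
  have hq : (q : ℂ) ≠ 0 := by exact_mod_cast NeZero.ne q
  have h1 := ed_sum_zero (fun x => (g x : ℂ)) 0 h0
  have h2 := ed_val (fun x => (g x : ℂ)) 0 h0
  have h3 := ed_galois g h (by
    have := h2.symm
    rcases mul_eq_zero.1 this with h | h
    · simp [hq] at h
    · exact h)
  have h4 : ∑ x : ZMod q, (g ((h : ZMod q) * x) : ℂ) = 0 := by
    rw [← h1]
    have := Equiv.sum_comp (Units.mulLeft h) (fun x => (g x : ℂ))
    simp only [Units.mulLeft_apply] at this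
    rw [this]
    simp [edF]
  obtain ⟨L, hL1, hL2⟩ := ed_dir (fun x => (g ((h : ZMod q) * x) : ℂ)) h4
  have h5 := ed_val (fun x => (g ((h : ZMod q) * x) : ℂ)) L hL1
  rw [h3, mul_zero] at h5
  rw [h5] at hL2
  exact hL2

end

section
open Filter Topology Finset
open NumberField

theorem ed_cop_of {q m k : ℕ} (hm : m ∈ Nat.factoredNumbers q.primeFactors) (hk : k.Coprime q) :
    m.Coprime k := by
  refine Nat.coprime_of_dvd fun p hp h1 h2 => ?_
  have := Nat.mem_factoredNumbers'.1 hm p hp h1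
  exact hp.one_lt.ne' (Nat.eq_one_of_dvd_coprimes hk h2 (Nat.dvd_of_mem_primeFactors this))

theorem ed_fac_inj (q : ℕ) : Function.Injective
    (fun x : Nat.factoredNumbers q.primeFactors × {k : ℕ | k.Coprime q} => (x.1 : ℕ) * (x.2 : ℕ)) := by
  rintro ⟨⟨m, hm⟩, ⟨k, hk⟩⟩ ⟨⟨m', hm'⟩, ⟨k', hk'⟩⟩ h
  simp only at h
  have h1 : m ∣ m' := (ed_cop_of hm hk').dvd_of_dvd_mul_right (h ▸ dvd_mul_right m k)
  have h2 : m' ∣ m := (ed_cop_of hm' hk).dvd_of_dvd_mul_right (h.symm ▸ dvd_mul_right m' k')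
  have h3 := Nat.dvd_antisymm h1 h2
  subst h3
  have := Nat.eq_of_mul_eq_mul_left (Nat.pos_of_ne_zero (Nat.ne_zero_of_mem_factoredNumbers hm)) h
  subst this
  rfl

theorem ed_fac_surj (q : ℕ) (hq : q ≠ 0) (n : ℕ) (hn : n ≠ 0) :
    ∃ m ∈ Nat.factoredNumbers q.primeFactors, ∃ k, k.Coprime q ∧ m * k = n := by
  induction n using induction_on_primes with
  | zero => exact absurd rfl hn
  | one => exact ⟨1, Nat.mem_factoredNumbers'.2 fun p hp h => absurd (Nat.dvd_one.1 h) hp.ne_one,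
      1, Nat.coprime_one_left q, rfl⟩
  | prime_mul p a hp ih =>
    obtain ⟨m, hm, k, hk, rfl⟩ := ih (right_ne_zero_of_mul hn)
    by_cases hpq : p ∣ q
    · refine ⟨p * m, Nat.mul_mem_factoredNumbers ?_ hm, k, hk, by ring⟩
      refine Nat.mem_factoredNumbers'.2 fun r hr h => ?_
      rw [(Nat.prime_dvd_prime_iff_eq hr hp).1 h]
      exact Nat.mem_primeFactors.2 ⟨hp, hpq, hq⟩
    · exact ⟨m, hm, p * k, Nat.Coprime.mul_left ((Nat.Prime.coprime_iff_not_dvd hp).2 hpq) hk, by ring⟩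

noncomputable def edG {q : ℕ} [NeZero q] (χ : DirichletCharacter ℂ q) (g : ZMod q → ℂ)
    (x : ZMod q) : ℂ := ∑ h : (ZMod q)ˣ, χ ((h⁻¹ : (ZMod q)ˣ) : ZMod q) * g ((h : ZMod q) * x)

theorem edG_mul {q : ℕ} [NeZero q] (χ : DirichletCharacter ℂ q) (g : ZMod q → ℂ)
    (x : ZMod q) (w : (ZMod q)ˣ) : edG χ g (x * w) = χ w * edG χ g x := by
  unfold edG
  rw [mul_sum, ← Equiv.sum_comp (Equiv.mulRight w⁻¹)]
  refine sum_congr rfl fun h _ => ?_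
  rw [Equiv.coe_mulRight, mul_inv_rev, inv_inv, Units.val_mul, Units.val_mul, map_mul, mul_assoc]
  congr 3
  rw [mul_assoc, mul_comm x, ← mul_assoc (_ : ZMod q) (w : ZMod q), Units.inv_mul, one_mul]

theorem ed_D {q : ℕ} [NeZero q] (χ : DirichletCharacter ℂ q) (g : ZMod q → ℂ) (s : ℝ) (hs : 1 < s) :
    ∑ h : (ZMod q)ˣ, χ ((h⁻¹ : (ZMod q)ˣ) : ZMod q) *
      ∑' n : ℕ, g ((h : ZMod q) * n) * (((n : ℝ) ^ (-s) : ℝ) : ℂ) =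
    (∑' m : Nat.factoredNumbers q.primeFactors, edG χ g ((m : ℕ) : ZMod q) *
      ((((m : ℕ) : ℝ) ^ (-s) : ℝ) : ℂ)) * ∑' n : ℕ, χ n * (((n : ℝ) ^ (-s) : ℝ) : ℂ) := by
  have h1 : ∑ h : (ZMod q)ˣ, χ ((h⁻¹ : (ZMod q)ˣ) : ZMod q) *
      ∑' n : ℕ, g ((h : ZMod q) * n) * (((n : ℝ) ^ (-s) : ℝ) : ℂ) =
      ∑' n : ℕ, edG χ g n * (((n : ℝ) ^ (-s) : ℝ) : ℂ) := by
    simp_rw [← tsum_mul_left]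
    rw [← Summable.tsum_finsetSum]
    · refine tsum_congr fun n => ?_
      rw [edG, sum_mul]
      exact sum_congr rfl fun h _ => by ring
    · intro h _
      exact (ed_summ (fun x => g ((h : ZMod q) * x)) s hs).mul_left _
  have h2 : ∑' n : ℕ, χ n * (((n : ℝ) ^ (-s) : ℝ) : ℂ) =
      ∑' k : {k : ℕ | k.Coprime q}, χ ((k : ℕ) : ZMod q) * ((((k : ℕ) : ℝ) ^ (-s) : ℝ) : ℂ) := by
    refine (tsum_subtype_eq_of_support_subset
      (f := fun n : ℕ => χ n * (((n : ℝ) ^ (-s) : ℝ) : ℂ)) ?_).symm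
    intro n hn
    by_contra hc
    apply hn
    have : ¬ IsUnit (n : ZMod q) := by
      rw [ZMod.isUnit_iff_coprime]; exact hc
    simp [χ.map_nonunit this]
  have hsumm := (ed_summ (edG χ g) s hs).norm
  have hsumm2 := (ed_summ (fun x => χ x) s hs).norm
  rw [h1, h2, tsum_mul_tsum_of_summable_norm
    (hsumm.comp_injective (i := fun m : Nat.factoredNumbers q.primeFactors => (m : ℕ))
      Subtype.val_injective)
    (hsumm2.comp_injective (i := fun k : {k : ℕ | k.Coprime q} => (k : ℕ)) Subtype.val_injective)]
  rw [← (ed_fac_inj q).tsum_eq (f := fun n : ℕ => edG χ g n * (((n : ℝ) ^ (-s) : ℝ) : ℂ))]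
  · refine tsum_congr ?_
    rintro ⟨⟨m, hm⟩, ⟨k, hk⟩⟩
    simp only [Nat.cast_mul]
    have hw : (k : ZMod q) = (ZMod.unitOfCoprime k hk : (ZMod q)ˣ) := by simp
    rw [hw, edG_mul, ← hw, Real.mul_rpow (by positivity) (by positivity)]
    push_cast
    ring
  · intro n hn
    have hn0 : n ≠ 0 := by
      rintro rfl
      apply hn
      simp [Real.zero_rpow (show -s ≠ 0 by linarith)]
    obtain ⟨m, hm, k, hk, h⟩ := ed_fac_surj q (NeZero.ne q) n hn0
    exact ⟨⟨⟨m, hm⟩, ⟨k, hk⟩⟩, h⟩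

theorem ed_L {q : ℕ} [NeZero q] (χ : DirichletCharacter ℂ q) (s : ℝ) (hs : 1 < s) :
    ∑' n : ℕ, χ n * (((n : ℝ) ^ (-s) : ℝ) : ℂ) = DirichletCharacter.LFunction χ s := by
  rw [DirichletCharacter.LFunction_eq_LSeries χ (by simpa using hs), LSeries]
  refine tsum_congr fun n => ?_
  rw [LSeries.term_of_ne_zero' (by exact_mod_cast (show s ≠ 0 by linarith)),
    Complex.ofReal_cpow (by positivity), div_eq_mul_inv, ← Complex.cpow_neg]
  push_cast
  rfl

theorem ed_Lw {q : ℕ} [NeZero q] (χ : DirichletCharacter ℂ q) :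
    ∃ (w Λ : ℝ → ℂ) (w0 c : ℂ), c ≠ 0 ∧ Tendsto w (𝓝[>] 1) (𝓝 w0) ∧ Tendsto Λ (𝓝[>] 1) (𝓝 c) ∧
      ∀ s : ℝ, 1 < s → w s * DirichletCharacter.LFunction χ s = Λ s := by
  by_cases hχ : χ = 1
  · refine ⟨fun s => s - 1, fun s => DirichletCharacter.LFunctionTrivChar₁ q s, 0,
      DirichletCharacter.LFunctionTrivChar₁ q 1,
      DirichletCharacter.LFunctionTrivChar₁_apply_one_ne_zero q, ?_, ?_, ?_⟩
    · have : ContinuousAt (fun s : ℝ => (s : ℂ) - 1) 1 := by fun_prop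
      have h := this.tendsto.mono_left (nhdsWithin_le_nhds (s := Set.Ioi 1))
      simpa using h
    · have : ContinuousAt (fun s : ℝ => DirichletCharacter.LFunctionTrivChar₁ q s) 1 :=
        ((DirichletCharacter.differentiable_LFunctionTrivChar₁ q).continuous.comp
          Complex.continuous_ofReal).continuousAt
      have h := this.tendsto.mono_left (nhdsWithin_le_nhds (s := Set.Ioi 1))
      rw [Complex.ofReal_one] at h
      exact h
    · intro s hs
      have : (s : ℂ) ≠ 1 := by exact_mod_cast hs.ne'
      simp only [DirichletCharacter.LFunctionTrivChar₁]
      rw [Function.update_of_ne this, hχ]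
  · refine ⟨fun s => 1, fun s => DirichletCharacter.LFunction χ s, 1,
      DirichletCharacter.LFunction χ 1,
      DirichletCharacter.LFunction_apply_one_ne_zero hχ, tendsto_const_nhds, ?_, ?_⟩
    · have : ContinuousAt (fun s : ℝ => DirichletCharacter.LFunction χ s) 1 :=
        ((DirichletCharacter.differentiable_LFunction hχ).continuous.comp
          Complex.continuous_ofReal).continuousAt
      have h := this.tendsto.mono_left (nhdsWithin_le_nhds (s := Set.Ioi 1))
      rw [Complex.ofReal_one] at h
      exact h
    · intro s _; rw [one_mul]

noncomputable def edInv : ℕ →* ℝ where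
  toFun n := (n : ℝ)⁻¹
  map_one' := by simp
  map_mul' m n := by push_cast; rw [mul_inv]

theorem ed_smooth (q : ℕ) (hq : q ≠ 0) :
    Summable (fun m : Nat.factoredNumbers q.primeFactors => (((m : ℕ) : ℝ))⁻¹) ∧
    (∑' m : Nat.factoredNumbers q.primeFactors, (((m : ℕ) : ℝ))⁻¹) * q.totient = q := by
  have := EulerProduct.summable_and_hasSum_factoredNumbers_prod_filter_prime_geometric
    (f := edInv) (by
      intro p hp
      simp only [edInv, MonoidHom.coe_mk, OneHom.coe_mk]
      rw [Real.norm_of_nonneg (by positivity)]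
      exact inv_lt_one_of_one_lt₀ (by exact_mod_cast hp.one_lt)) q.primeFactors
  refine ⟨this.2.summable, ?_⟩
  have h2 := this.2.tsum_eq
  have h3 := Nat.totient_eq_mul_prod_factors q
  have h4 : (q.totient : ℝ) = q * ∏ p ∈ q.primeFactors, (1 - (p : ℝ)⁻¹) := by
    have : ((q.totient : ℚ) : ℝ) = ((q * ∏ p ∈ q.primeFactors, (1 - (p : ℚ)⁻¹) : ℚ) : ℝ) := by rw [h3]
    push_cast at this
    exact this
  have h5 : ∑' m : Nat.factoredNumbers q.primeFactors, (((m : ℕ) : ℝ))⁻¹ =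
      ∏ p ∈ q.primeFactors, (1 - (p : ℝ)⁻¹)⁻¹ := by
    refine h2.trans ?_
    rw [filter_true_of_mem (fun p hp => Nat.prime_of_mem_primeFactors hp)]
    rfl
  rw [h5, h4, prod_inv_distrib]
  have : ∏ p ∈ q.primeFactors, (1 - (p : ℝ)⁻¹) ≠ 0 := by
    refine prod_ne_zero_iff.2 fun p hp => ?_
    have := inv_lt_one_of_one_lt₀ (show (1:ℝ) < p by
      exact_mod_cast (Nat.prime_of_mem_primeFactors hp).one_lt)
    linarith
  rw [mul_comm (q : ℝ), ← mul_assoc, inv_mul_cancel₀ this, one_mul]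

theorem ed_Dzero {q : ℕ} [NeZero q] (g : ZMod q → ℤ)
    (h0 : Tendsto (fun n => ∑ i ∈ range n, (g i : ℂ) / (i : ℂ)) atTop (𝓝 0))
    (χ : DirichletCharacter ℂ q) :
    ∑' m : Nat.factoredNumbers q.primeFactors, edG χ (fun x => (g x : ℂ)) ((m : ℕ) : ZMod q) *
      (((((m : ℕ) : ℝ))⁻¹ : ℝ) : ℂ) = 0 := by
  obtain ⟨w, Λ, w0, c, hc, hw, hΛ, hwΛ⟩ := ed_Lw χ
  have hH : Tendsto (fun s : ℝ => ∑ h : (ZMod q)ˣ, χ ((h⁻¹ : (ZMod q)ˣ) : ZMod q) *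
      ∑' n : ℕ, (g ((h : ZMod q) * n) : ℂ) * (((n : ℝ) ^ (-s) : ℝ) : ℂ)) (𝓝[>] 1) (𝓝 0) := by
    have := tendsto_finsetSum (univ : Finset (ZMod q)ˣ) (fun h _ =>
      (ed_zero g h0 h).const_mul (χ ((h⁻¹ : (ZMod q)ˣ) : ZMod q)))
    simpa using this
  have hD : Tendsto (fun s : ℝ => ∑' m : Nat.factoredNumbers q.primeFactors,
      edG χ (fun x => (g x : ℂ)) ((m : ℕ) : ZMod q) * ((((m : ℕ) : ℝ) ^ (-s) : ℝ) : ℂ)) (𝓝[>] 1)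
      (𝓝 (∑' m : Nat.factoredNumbers q.primeFactors, edG χ (fun x => (g x : ℂ)) ((m : ℕ) : ZMod q) *
      (((((m : ℕ) : ℝ))⁻¹ : ℝ) : ℂ))) := by
    refine tendsto_tsum_of_dominated_convergence
      (bound := fun m => (∑ x, ‖edG χ (fun x => (g x : ℂ)) x‖) * (((m : ℕ) : ℝ))⁻¹)
      ((ed_smooth q (NeZero.ne q)).1.mul_left _) ?_ ?_
    · intro m
      have hm : ((m : ℕ) : ℝ) ≠ 0 := by
        exact_mod_cast Nat.ne_zero_of_mem_factoredNumbers m.2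
      refine Tendsto.const_mul _ ?_
      have : ContinuousAt (fun s : ℝ => ((((m : ℕ) : ℝ) ^ (-s) : ℝ) : ℂ)) 1 :=
        Complex.continuous_ofReal.continuousAt.comp
          (ContinuousAt.rpow continuousAt_const continuousAt_neg (Or.inl hm))
      have h := this.tendsto.mono_left (nhdsWithin_le_nhds (s := Set.Ioi 1))
      rw [Real.rpow_neg_one] at h
      exact h
    · filter_upwards [self_mem_nhdsWithin] with s hs m
      have hm : (1:ℝ) ≤ ((m : ℕ) : ℝ) := by
        exact_mod_cast Nat.pos_of_ne_zero (Nat.ne_zero_of_mem_factoredNumbers m.2)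
      rw [norm_mul, Complex.norm_real, Real.norm_of_nonneg (by positivity)]
      gcongr
      · exact single_le_sum (f := fun x => ‖edG χ (fun x => (g x : ℂ)) x‖)
          (fun _ _ => norm_nonneg _) (mem_univ _)
      · rw [← Real.rpow_neg_one]
        exact Real.rpow_le_rpow_of_exponent_le hm (by simp at hs; linarith)
  have h1 := hw.mul hH
  have h2 := hD.mul hΛ
  rw [mul_zero] at h1
  have h3 := tendsto_nhds_unique (h2.congr' ?_) h1
  · exact (mul_eq_zero.1 h3).resolve_right hc
  · filter_upwards [self_mem_nhdsWithin] with s hs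
    rw [← hwΛ s hs, ed_D χ (fun x => (g x : ℂ)) s hs, ed_L χ s hs]
    ring

theorem ed_Fzero {q : ℕ} [NeZero q] (g : ZMod q → ℤ) (hb : ∀ x, |g x| ≤ 1)
    (h0 : Tendsto (fun n => ∑ i ∈ range n, (g i : ℂ) / (i : ℂ)) atTop (𝓝 0)) :
    ∑' m : Nat.factoredNumbers q.primeFactors, (g ((m : ℕ) : ZMod q) : ℂ) *
      (((((m : ℕ) : ℝ))⁻¹ : ℝ) : ℂ) = 0 := by
  have hS : ∀ u : ZMod q, Summable (fun m : Nat.factoredNumbers q.primeFactors =>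
      (g (u * ((m : ℕ) : ZMod q)) : ℂ) * (((((m : ℕ) : ℝ))⁻¹ : ℝ) : ℂ)) := by
    intro u
    refine Summable.of_norm_bounded (ed_smooth q (NeZero.ne q)).1 fun m => ?_
    rw [norm_mul, Complex.norm_real, Real.norm_of_nonneg (by positivity)]
    refine mul_le_of_le_one_left (by positivity) ?_
    rw [Complex.norm_intCast]
    exact_mod_cast hb _
  have h1 : ∑ χ : DirichletCharacter ℂ q, ∑' m : Nat.factoredNumbers q.primeFactors,
      edG χ (fun x => (g x : ℂ)) ((m : ℕ) : ZMod q) * (((((m : ℕ) : ℝ))⁻¹ : ℝ) : ℂ) = 0 :=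
    sum_eq_zero fun χ _ => ed_Dzero g h0 χ
  rw [← Summable.tsum_finsetSum] at h1
  · have h2 : ∀ m : Nat.factoredNumbers q.primeFactors, ∑ χ : DirichletCharacter ℂ q,
      edG χ (fun x => (g x : ℂ)) ((m : ℕ) : ZMod q) * (((((m : ℕ) : ℝ))⁻¹ : ℝ) : ℂ) =
      (q.totient : ℂ) * ((g ((m : ℕ) : ZMod q) : ℂ) * (((((m : ℕ) : ℝ))⁻¹ : ℝ) : ℂ)) := by
      intro m
      rw [← sum_mul, ← mul_assoc]
      congr 1
      simp only [edG]
      rw [sum_comm]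
      simp_rw [← sum_mul]
      have h3 : ∀ u : (ZMod q)ˣ, ∑ χ : DirichletCharacter ℂ q, χ ((u⁻¹ : (ZMod q)ˣ) : ZMod q) =
          if u = 1 then (q.totient : ℂ) else 0 := by
        intro u
        have := DirichletCharacter.sum_char_inv_mul_char_eq ℂ (u.isUnit) (1 : ZMod q)
        simp only [map_one, mul_one, Units.val_eq_one] at this
        rw [← this]
        refine sum_congr rfl fun χ _ => ?_
        rw [ZMod.inv_coe_unit]
      simp only [h3, ite_mul, zero_mul, sum_ite_eq', mem_univ, if_true, Units.val_one, one_mul]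
    simp_rw [h2, tsum_mul_left] at h1
    refine (mul_eq_zero.1 h1).resolve_left ?_
    have := Nat.totient_pos.2 (NeZero.pos q)
    exact_mod_cast this.ne'
  · intro χ _
    simp only [edG, sum_mul, mul_assoc]
    refine summable_sum fun u _ => ?_
    exact (hS u).mul_left _

theorem ed_main_g {q : ℕ} [NeZero q] (g : ZMod q → ℤ) (hb : ∀ x, |g x| ≤ 1) (hg1 : |g 1| = 1)
    (h0 : Tendsto (fun n => ∑ i ∈ range n, (g i : ℂ) / (i : ℂ)) atTop (𝓝 0)) :
    2 * q.totient ≤ q := by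
  have hF := ed_Fzero g hb h0
  obtain ⟨hs, hsum⟩ := ed_smooth q (NeZero.ne q)
  let one : Nat.factoredNumbers q.primeFactors :=
    ⟨1, Nat.mem_factoredNumbers'.2 fun p hp h => absurd (Nat.dvd_one.1 h) hp.ne_one⟩
  have hle : ∀ m : Nat.factoredNumbers q.primeFactors,
      ‖(g ((m : ℕ) : ZMod q) : ℂ) * (((((m : ℕ) : ℝ))⁻¹ : ℝ) : ℂ)‖ ≤ (((m : ℕ) : ℝ))⁻¹ := by
    intro m
    rw [norm_mul, Complex.norm_real, Real.norm_of_nonneg (by positivity)]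
    refine mul_le_of_le_one_left (by positivity) ?_
    rw [Complex.norm_intCast]
    exact_mod_cast hb _
  have hSg : Summable (fun m : Nat.factoredNumbers q.primeFactors =>
      (g ((m : ℕ) : ZMod q) : ℂ) * (((((m : ℕ) : ℝ))⁻¹ : ℝ) : ℂ)) :=
    Summable.of_norm_bounded hs hle
  classical
  rw [hSg.tsum_eq_add_tsum_ite one] at hF
  have e2 := hs.tsum_eq_add_tsum_ite one
  have h1 : ‖∑' m : Nat.factoredNumbers q.primeFactors, ite (m = one) 0
      ((g ((m : ℕ) : ZMod q) : ℂ) * (((((m : ℕ) : ℝ))⁻¹ : ℝ) : ℂ))‖ ≤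
      ∑' m : Nat.factoredNumbers q.primeFactors, ite (m = one) 0 (((m : ℕ) : ℝ))⁻¹ := by
    refine tsum_of_norm_bounded (Summable.hasSum ?_) ?_
    · refine Summable.of_nonneg_of_le (fun m => ?_) (fun m => ?_) hs
      · split_ifs <;> positivity
      · split_ifs
        · positivity
        · exact le_rfl
    · intro m
      split_ifs
      · simp
      · exact hle m
  rw [eq_neg_iff_add_eq_zero.2 ((add_comm _ _).trans hF), norm_neg] at h1
  simp only [one, Nat.cast_one, inv_one, Complex.ofReal_one, mul_one, Complex.norm_intCast] at h1 e2
  have h3 : |(g 1 : ℝ)| = 1 := by exact_mod_cast hg1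
  rw [h3] at h1
  have : (2 : ℝ) ≤ ∑' m : Nat.factoredNumbers q.primeFactors, (((m : ℕ) : ℝ))⁻¹ := by
    rw [e2]; linarith
  have h5 : (2 : ℝ) * q.totient ≤ q := by
    rw [← hsum]
    gcongr
  exact_mod_cast h5

end

open Filter Topology Finset
open NumberField

theorem ed_false_imp (q : ℕ) (hq : 2 ≤ q) (hF : ErdosConjectureFalse q) : 2 * q.totient ≤ q := by
  obtain ⟨f, ⟨hper, hpm, hz⟩, hlim⟩ := hF
  have : NeZero q := ⟨by omega⟩
  let g : ZMod q → ℤ := fun x => f (x.val + q)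
  have hper2 : ∀ k n : ℕ, 1 ≤ n → f (n + q * k) = f n := by
    intro k n hn
    induction k with
    | zero => simp
    | succ k ih => rw [mul_add, mul_one, ← add_assoc, hper _ (by omega), ih]
  have hgf : ∀ n : ℕ, 1 ≤ n → g n = f n := by
    intro n hn
    simp only [g, ZMod.val_natCast]
    have h1 := hper2 (n / q) (n % q + q) (by omega)
    have h2 : n % q + q + q * (n / q) = n + q := by
      have := Nat.mod_add_div n q
      omega
    rw [← h1, h2, hper n hn]
  refine ed_main_g g ?_ ?_ ?_
  · intro x
    simp only [g]
    by_cases h : q ∣ x.val + q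
    · rw [hz _ (by omega) h]; simp
    · rcases hpm _ (by omega) h with h | h <;> rw [h] <;> simp
  · have := hgf 1 le_rfl
    rw [Nat.cast_one] at this
    rw [this]
    rcases hpm 1 le_rfl (by rw [Nat.dvd_one]; omega) with h | h <;> rw [h] <;> simp
  · rw [← tendsto_add_atTop_iff_nat 1]
    have h1 := (Complex.continuous_ofReal.tendsto 0).comp hlim
    rw [Complex.ofReal_zero] at h1
    refine h1.congr fun N => ?_
    rw [sum_range_succ']
    simp only [Nat.cast_zero, div_zero, add_zero, Function.comp]
    rw [Complex.ofReal_sum, ← Finset.Ico_add_one_right_eq_Icc, Finset.sum_Ico_eq_sum_range]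
    refine sum_congr rfl fun i _ => ?_
    rw [hgf (i + 1) (by omega), add_comm 1 i]
    push_cast
    rfl

def edw (k : ℕ) : ℕ :=
  if 3 ∣ k then (if 5 ∣ k then (if 7 ∣ k then 0 else 16) else (if 7 ∣ k then 8 else 4))
  else (if 5 ∣ k then (if 7 ∣ k then 4 else 3) else (if 7 ∣ k then 3 else 2))

theorem ed_per (u : ℕ → ℕ) (P : ℕ) (hP : 0 < P) (hu : ∀ k, u (k + P) = u k) (Y : ℕ) :
    ∑ k ∈ Icc 1 Y, u k ≤ (Y / P + 1) * ∑ k ∈ range P, u k := by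
  have h1 : ∀ m, ∑ k ∈ range (m * P), u k = m * ∑ k ∈ range P, u k := by
    intro m
    induction m with
    | zero => simp
    | succ m ih =>
      rw [add_mul, one_mul, sum_range_add, ih, add_mul, one_mul]
      congr 1
      refine sum_congr rfl fun i _ => ?_
      clear ih
      induction m with
      | zero => simp
      | succ m ih => rw [← ih, ← hu (m * P + i)]; congr 1; ring
  rw [← h1]
  refine sum_le_sum_of_subset fun k hk => ?_
  rw [mem_Icc] at hk
  rw [mem_range, mul_comm]
  exact lt_of_le_of_lt hk.2 (Nat.lt_mul_div_succ Y hP)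

theorem edw_per (k : ℕ) : edw (k + 420) = edw k := by
  have h3 : 3 ∣ k + 420 ↔ 3 ∣ k := by omega
  have h5 : 5 ∣ k + 420 ↔ 5 ∣ k := by omega
  have h7 : 7 ∣ k + 420 ↔ 7 ∣ k := by omega
  simp only [edw, h3, h5, h7]

theorem edw_mul (p k : ℕ) (hp : p.Prime) (h11 : 11 ≤ p) : edw (p * k) = edw k := by
  have h : ∀ r : ℕ, r.Prime → r < 11 → (r ∣ p * k ↔ r ∣ k) := by
    intro r hr hr11
    refine Nat.Coprime.dvd_mul_left ?_
    exact (Nat.coprime_primes hr hp).2 (by omega)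
  simp only [edw, h 3 (by norm_num) (by norm_num), h 5 (by norm_num) (by norm_num),
    h 7 (by norm_num) (by norm_num)]

theorem edw_W (r : ℕ) (hr : r = 1 ∨ r = 3) :
    ∑ k ∈ range 420, (if k % 4 = r then edw k else 0) = 388 := by
  rcases hr with rfl | rfl <;> decide +kernel

theorem edw_inner (X p : ℕ) (hp : p.Prime) (h11 : 11 ≤ p) :
    ∑ q ∈ (Icc 1 X).filter (fun q => q % 4 = 1 ∧ p ∣ q), edw q ≤ (X / p / 420 + 1) * 388 := by
  have hodd : p % 4 = 1 ∨ p % 4 = 3 := by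
    have := hp.eq_two_or_odd
    omega
  have h1 : (Icc 1 X).filter (fun q => q % 4 = 1 ∧ p ∣ q) ⊆
      ((Icc 1 (X / p)).filter (fun k => k % 4 = p % 4)).image (fun k => p * k) := by
    intro q hq
    rw [mem_filter, mem_Icc] at hq
    obtain ⟨⟨hq1, hq2⟩, hq4, k, rfl⟩ := hq
    rw [mem_image]
    refine ⟨k, ?_, rfl⟩
    rw [mem_filter, mem_Icc]
    refine ⟨⟨Nat.pos_of_ne_zero (by rintro rfl; simp at hq1), ?_⟩, ?_⟩
    · rw [Nat.le_div_iff_mul_le hp.pos, mul_comm]; exact hq2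
    · rw [Nat.mul_mod] at hq4
      have : k % 4 < 4 := Nat.mod_lt _ (by norm_num)
      rcases hodd with h | h <;> rw [h] at hq4 ⊢ <;> omega
  refine (sum_le_sum_of_subset h1).trans ?_
  rw [sum_image (fun a _ b _ h => Nat.eq_of_mul_eq_mul_left hp.pos h)]
  simp_rw [edw_mul p _ hp h11]
  rw [sum_filter, ← edw_W (p % 4) hodd]
  refine ed_per (fun k => if k % 4 = p % 4 then edw k else 0) 420 (by norm_num) ?_ _
  intro k
  simp only [edw_per]
  have : (k + 420) % 4 = k % 4 := by omega
  rw [this]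

theorem ed_prod_ge (s : Finset ℕ) (hs : ∀ p ∈ s, 1 ≤ p) :
    1 - ∑ p ∈ s, (p : ℝ)⁻¹ ≤ ∏ p ∈ s, (1 - (p : ℝ)⁻¹) ∧ ∏ p ∈ s, (1 - (p : ℝ)⁻¹) ≤ 1 ∧
      0 ≤ ∏ p ∈ s, (1 - (p : ℝ)⁻¹) := by
  induction s using Finset.induction_on with
  | empty => simp
  | insert a s ha ih =>
    rw [sum_insert ha, prod_insert ha]
    obtain ⟨i1, i2, i3⟩ := ih fun p hp => hs p (mem_insert_of_mem hp)
    have h1 : (1:ℝ) ≤ a := by exact_mod_cast hs a (mem_insert_self _ _)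
    have h2 : (a:ℝ)⁻¹ ≤ 1 := inv_le_one_of_one_le₀ h1
    have h3 : 0 ≤ (a:ℝ)⁻¹ := by positivity
    refine ⟨?_, ?_, ?_⟩ <;> nlinarith

theorem ed_bad (q : ℕ) (hq : q % 4 = 1) (h : 2 * q.totient ≤ q) :
    105 ∣ q ∨ 1 ≤ (edw q : ℝ) * ∑ p ∈ q.primeFactors.filter (fun p => ¬ p < 11), (p : ℝ)⁻¹ := by
  by_cases h105 : 105 ∣ q
  · exact Or.inl h105
  right
  have hq0 : q ≠ 0 := by omega
  have h4 : (q.totient : ℝ) = q * ∏ p ∈ q.primeFactors, (1 - (p : ℝ)⁻¹) := by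
    have : ((q.totient : ℚ) : ℝ) = ((q * ∏ p ∈ q.primeFactors, (1 - (p : ℚ)⁻¹) : ℚ) : ℝ) := by
      rw [Nat.totient_eq_mul_prod_factors q]
    push_cast at this
    exact this
  have hq0' : (0:ℝ) < q := by exact_mod_cast Nat.pos_of_ne_zero hq0
  have h5 : 2 * ∏ p ∈ q.primeFactors, (1 - (p : ℝ)⁻¹) ≤ 1 := by
    have : (2 * q.totient : ℝ) ≤ q := by exact_mod_cast h
    rw [h4] at this
    nlinarith
  rw [← prod_filter_mul_prod_filter_not q.primeFactors (fun p => p < 11)] at h5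
  obtain ⟨i1, i2, i3⟩ := ed_prod_ge (q.primeFactors.filter (fun p => ¬ p < 11)) (by
    intro p hp
    exact (Nat.prime_of_mem_primeFactors (mem_filter.1 hp).1).pos)
  have hsmall : q.primeFactors.filter (fun p => p < 11) =
      ({3, 5, 7} : Finset ℕ).filter (fun p => p ∣ q) := by
    ext p
    simp only [mem_filter, Nat.mem_primeFactors, mem_insert, mem_singleton]
    constructor
    · rintro ⟨⟨hp, hpq, _⟩, hlt⟩
      refine ⟨?_, hpq⟩
      interval_cases p <;> first | (exfalso; revert hp; norm_num; done) | (exfalso; omega) | norm_num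
    · rintro ⟨rfl | rfl | rfl, h⟩ <;> exact ⟨⟨by norm_num, h, hq0⟩, by norm_num⟩
  rw [hsmall, prod_filter] at h5
  set Q := ∏ p ∈ q.primeFactors.filter (fun p => ¬ p < 11), (1 - (p : ℝ)⁻¹)
  set T := ∑ p ∈ q.primeFactors.filter (fun p => ¬ p < 11), (p : ℝ)⁻¹
  have hT : 0 ≤ T := sum_nonneg fun p _ => by positivity
  simp only [edw]
  by_cases c3 : 3 ∣ q <;> by_cases c5 : 5 ∣ q <;> by_cases c7 : 7 ∣ q
  · exfalso; omega
  all_goals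
    simp [c3, c5, c7] at h5 ⊢
    norm_num at h5
    linarith

theorem ed_psq (X : ℕ) (hX : 6 ≤ X) :
    ∑ p ∈ (Icc 11 X).filter Nat.Prime, ((p : ℝ) ^ 2)⁻¹ ≤ 0.0434 := by
  have h1 : ∀ N : ℕ, ∑ j ∈ range N, (((2 * j + 11 : ℕ) : ℝ) ^ 2)⁻¹ ≤ 1 / 20 - 1 / (2 * (2 * N + 10)) := by
    intro N
    induction N with
    | zero => norm_num
    | succ N ih =>
      rw [sum_range_succ]
      have : (((2 * N + 11 : ℕ) : ℝ) ^ 2)⁻¹ ≤ 1 / (2 * (2 * N + 10)) - 1 / (2 * (2 * (N + 1 : ℕ) + 10)) := by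
        push_cast
        have hN : (0:ℝ) ≤ N := Nat.cast_nonneg N
        rw [div_sub_div _ _ (by positivity) (by positivity), inv_eq_one_div,
          div_le_div_iff₀ (by positivity) (by positivity)]
        nlinarith
      linarith
  have h2 : (insert 15 (insert 21 ((Icc 11 X).filter Nat.Prime))) ⊆
      (range X).image (fun j => 2 * j + 11) := by
    intro p hp
    rw [mem_image]
    rw [mem_insert, mem_insert, mem_filter, mem_Icc] at hp
    rcases hp with rfl | rfl | ⟨⟨ha, hb⟩, hp⟩
    · exact ⟨2, mem_range.2 (by omega), rfl⟩
    · exact ⟨5, mem_range.2 (by omega), rfl⟩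
    · have := hp.eq_two_or_odd
      exact ⟨(p - 11) / 2, mem_range.2 (by omega), by omega⟩
  have h3 := sum_le_sum_of_subset_of_nonneg (f := fun p : ℕ => ((p : ℝ) ^ 2)⁻¹) h2
    (fun _ _ _ => by positivity)
  rw [sum_image (fun a _ b _ h => by simpa using h), sum_insert, sum_insert] at h3
  · have h4 := h1 X
    have h5 : (0:ℝ) ≤ (2 * (X:ℝ) + 10)⁻¹ * (1/2) := by positivity
    norm_num at h3 h4 ⊢
    linarith
  · simp; norm_num
  · simp; norm_num

open scoped Classical in
theorem ed_count (X : ℕ) (hX : 6 ≤ X) :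
    (((Icc 1 X).filter (fun q => q % 4 = 1 ∧ ErdosConjectureFalse q)).card : ℝ) ≤
      0.044 * X + 10 ^ 9 := by
  set I := (Icc 1 X).filter (fun q => q % 4 = 1) with hI
  set A := (Icc 11 X).filter Nat.Prime with hA
  have h1 : ∀ q ∈ I, (if ErdosConjectureFalse q then (1:ℝ) else 0) ≤ (if q = 1 then 1 else 0) +
      (if 105 ∣ q then 1 else 0) + ∑ p ∈ A, (if p ∣ q then (edw q : ℝ) * (p:ℝ)⁻¹ else 0) := by
    intro q hq
    rw [hI, mem_filter, mem_Icc] at hq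
    have hnn : (0:ℝ) ≤ ∑ p ∈ A, (if p ∣ q then (edw q : ℝ) * (p:ℝ)⁻¹ else 0) :=
      sum_nonneg fun p _ => by split_ifs <;> positivity
    by_cases hF : ErdosConjectureFalse q
    swap
    · rw [if_neg hF]
      have a1 : (0:ℝ) ≤ (if q = 1 then 1 else 0) := by split_ifs <;> norm_num
      have a2 : (0:ℝ) ≤ (if 105 ∣ q then 1 else 0) := by split_ifs <;> norm_num
      linarith
    rw [if_pos hF]
    by_cases hq1 : q = 1
    · rw [if_pos hq1]
      have a2 : (0:ℝ) ≤ (if 105 ∣ q then 1 else 0) := by split_ifs <;> norm_num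
      linarith
    rw [if_neg hq1]
    rcases ed_bad q hq.2 (ed_false_imp q (by omega) hF) with h | h
    · rw [if_pos h]; linarith
    · have a2 : (0:ℝ) ≤ (if 105 ∣ q then 1 else 0) := by split_ifs <;> norm_num
      have : (edw q : ℝ) * ∑ p ∈ q.primeFactors.filter (fun p => ¬ p < 11), (p : ℝ)⁻¹ ≤
          ∑ p ∈ A, (if p ∣ q then (edw q : ℝ) * (p:ℝ)⁻¹ else 0) := by
        rw [← sum_filter, ← mul_sum]
        gcongr
        intro p hp
        rw [mem_filter, Nat.mem_primeFactors] at hp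
        rw [mem_filter, hA, mem_filter, mem_Icc]
        exact ⟨⟨⟨by omega, (Nat.le_of_dvd (by omega) hp.1.2.1).trans hq.1.2⟩, hp.1.1⟩, hp.1.2.1⟩
      linarith
  have h2 : (((Icc 1 X).filter (fun q => q % 4 = 1 ∧ ErdosConjectureFalse q)).card : ℝ) =
      ∑ q ∈ I, (if ErdosConjectureFalse q then (1:ℝ) else 0) := by
    rw [← sum_filter, hI, filter_filter]; simp
  rw [h2]
  refine (sum_le_sum h1).trans ?_
  rw [sum_add_distrib, sum_add_distrib]
  have b1 : ∑ q ∈ I, (if q = 1 then (1:ℝ) else 0) ≤ 1 := by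
    rw [sum_ite_eq']; split_ifs <;> norm_num
  have b2 : ∑ q ∈ I, (if 105 ∣ q then (1:ℝ) else 0) ≤ X / 420 + 1 := by
    have := ed_per (fun k => if k % 4 = 1 ∧ 105 ∣ k then 1 else 0) 420 (by norm_num) (by
      intro k
      have : (k + 420) % 4 = k % 4 := by omega
      have h' : 105 ∣ k + 420 ↔ 105 ∣ k := by omega
      simp only [this, h']) X
    have h5 : ∑ k ∈ range 420, (if k % 4 = 1 ∧ 105 ∣ k then 1 else 0) = 1 := by decide +kernel
    rw [h5, mul_one] at this
    have h6 : ∑ q ∈ I, (if 105 ∣ q then (1:ℝ) else 0) =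
        ((∑ k ∈ Icc 1 X, (if k % 4 = 1 ∧ 105 ∣ k then 1 else 0) : ℕ) : ℝ) := by
      push_cast
      rw [hI, ← sum_filter, ← sum_filter, filter_filter]
    rw [h6]
    have h7 : ((X / 420 + 1 : ℕ) : ℝ) ≤ X / 420 + 1 := by
      push_cast
      gcongr
      exact Nat.cast_div_le
    exact le_trans (by exact_mod_cast this) h7
  have b3 : ∑ q ∈ I, ∑ p ∈ A, (if p ∣ q then (edw q : ℝ) * (p:ℝ)⁻¹ else 0) ≤
      ∑ p ∈ A, (388 / 420 * X * ((p:ℝ) ^ 2)⁻¹ + 388 * (10 ^ 6 * ((p:ℝ) ^ 2)⁻¹ + 1 / (4 * 10 ^ 6))) := by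
    rw [sum_comm]
    refine sum_le_sum fun p hp => ?_
    rw [hA, mem_filter, mem_Icc] at hp
    have hp0 : (0:ℝ) < p := by exact_mod_cast hp.2.pos
    have h5 := edw_inner X p hp.2 hp.1.1
    have h6 : ∑ q ∈ I, (if p ∣ q then (edw q : ℝ) * (p:ℝ)⁻¹ else 0) =
        ((∑ q ∈ (Icc 1 X).filter (fun q => q % 4 = 1 ∧ p ∣ q), edw q : ℕ) : ℝ) * (p:ℝ)⁻¹ := by
      push_cast
      rw [hI, ← sum_filter, filter_filter, sum_mul]
    rw [h6]
    have h7 : ((∑ q ∈ (Icc 1 X).filter (fun q => q % 4 = 1 ∧ p ∣ q), edw q : ℕ) : ℝ) ≤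
        (X / p / 420 + 1) * 388 := by
      have h8 : (((X / p / 420 + 1) * 388 : ℕ) : ℝ) ≤ (X / p / 420 + 1) * 388 := by
        push_cast
        gcongr
        refine Nat.cast_div_le.trans ?_
        push_cast
        gcongr
        exact Nat.cast_div_le
      exact le_trans (by exact_mod_cast h5) h8
    have h9 : (p:ℝ)⁻¹ ≤ 10 ^ 6 * ((p:ℝ) ^ 2)⁻¹ + 1 / (4 * 10 ^ 6) := by
      rw [← inv_pow]
      nlinarith [sq_nonneg ((p:ℝ)⁻¹ - 1 / (2 * 10 ^ 6))]
    calc _ ≤ (X / p / 420 + 1) * 388 * (p:ℝ)⁻¹ := by gcongr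
      _ = 388 / 420 * X * ((p:ℝ) ^ 2)⁻¹ + 388 * (p:ℝ)⁻¹ := by field_simp
      _ ≤ _ := by gcongr
  have b4 : ∑ p ∈ A, (388 / 420 * X * ((p:ℝ) ^ 2)⁻¹ +
      388 * (10 ^ 6 * ((p:ℝ) ^ 2)⁻¹ + 1 / (4 * 10 ^ 6))) =
      (388 / 420 * X + 388 * 10 ^ 6) * ∑ p ∈ A, ((p:ℝ) ^ 2)⁻¹ + A.card * (388 / (4 * 10 ^ 6)) := by
    rw [mul_sum, ← nsmul_eq_mul, ← sum_const, ← sum_add_distrib]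
    exact sum_congr rfl fun p _ => by ring
  have b5 := ed_psq X hX
  have b6 : (A.card : ℝ) ≤ X := by
    have : A.card ≤ (Icc 1 X).card := card_le_card (by
      intro p hp
      rw [hA, mem_filter, mem_Icc] at hp
      rw [mem_Icc]; omega)
    rw [Nat.card_Icc] at this
    exact_mod_cast this
  rw [b4] at b3
  have hX0 : (0:ℝ) ≤ X := Nat.cast_nonneg X
  have b7 : (388 / 420 * X + 388 * 10 ^ 6) * ∑ p ∈ A, ((p:ℝ) ^ 2)⁻¹ ≤
      (388 / 420 * X + 388 * 10 ^ 6) * 0.0434 := by gcongr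
  have b8 : (A.card : ℝ) * (388 / (4 * 10 ^ 6)) ≤ X * (388 / (4 * 10 ^ 6)) := by gcongr
  norm_num at b7 b8 b3 b2 b1 ⊢
  linarith

open scoped Classical in
theorem erdos_true_density_82 :
    0.82 ≤ atTop.liminf (fun X : ℕ =>
      (((Finset.Icc 1 X).filter
        (fun q => q % 4 = 1 ∧ ErdosConjectureHolds q)).card : ℝ) / ((X : ℝ) / 4)) := by
  have htot : ∀ X : ℕ, (X : ℝ) / 4 ≤ (((Icc 1 X).filter (fun q => q % 4 = 1)).card : ℝ) := by
    intro X
    have : (X + 3) / 4 ≤ ((Icc 1 X).filter (fun q => q % 4 = 1)).card := by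
      have h1 : ((range ((X + 3) / 4)).image (fun j => 4 * j + 1)) ⊆
          (Icc 1 X).filter (fun q => q % 4 = 1) := by
        intro q hq
        rw [mem_image] at hq
        obtain ⟨j, hj, rfl⟩ := hq
        rw [mem_range] at hj
        rw [mem_filter, mem_Icc]
        omega
      have h2 := card_le_card h1
      rwa [card_image_of_injective _ (fun a b h => by simpa using h), card_range] at h2
    have h3 : X ≤ 4 * ((Icc 1 X).filter (fun q => q % 4 = 1)).card := by omega
    have h4 : (X : ℝ) ≤ 4 * (((Icc 1 X).filter (fun q => q % 4 = 1)).card : ℝ) := by exact_mod_cast h3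
    linarith
  have hsplit : ∀ X : ℕ, (((Icc 1 X).filter (fun q => q % 4 = 1)).card : ℝ) =
      (((Icc 1 X).filter (fun q => q % 4 = 1 ∧ ErdosConjectureHolds q)).card : ℝ) +
      (((Icc 1 X).filter (fun q => q % 4 = 1 ∧ ErdosConjectureFalse q)).card : ℝ) := by
    intro X
    have := card_filter_add_card_filter_not (s := (Icc 1 X).filter (fun q => q % 4 = 1))
      (fun q => ErdosConjectureHolds q)
    rw [filter_filter, filter_filter] at this
    simp only [ErdosConjectureHolds, not_not] at this ⊢
    exact_mod_cast this.symm
  refine le_liminf_of_le ?_ ?_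
  · refine IsBoundedUnder.isCoboundedUnder_ge ⟨4, ?_⟩
    rw [eventually_map]
    filter_upwards with X
    have h1 : (((Icc 1 X).filter (fun q => q % 4 = 1 ∧ ErdosConjectureHolds q)).card : ℝ) ≤ X := by
      have := card_filter_le (Icc 1 X) (fun q => q % 4 = 1 ∧ ErdosConjectureHolds q)
      rw [Nat.card_Icc] at this
      exact_mod_cast this
    refine div_le_of_le_mul₀ (by positivity) (by norm_num) ?_
    linarith
  · filter_upwards [eventually_ge_atTop (10 ^ 12)] with X hX
    have hX' : (10 ^ 12 : ℝ) ≤ X := by exact_mod_cast hX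
    have h1 := ed_count X (le_trans (by norm_num) hX)
    have h2 := htot X
    rw [hsplit X] at h2
    rw [le_div_iff₀ (by linarith)]
    norm_num at h1 ⊢
    linarith
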